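/- arXiv:1312.2917 — 2 statements merged into one kernel-verified Lean document; each statement's English description precedes it below -/
import Mathlib

section
/- Commutator estimate (Lemma 3.5): For every φ ∈ C₂, one has ‖H*M*φ − M*H*φ‖_{L¹(ℝ)} ≲ ε·log(1/ε). -/
noncomputable section
open Set MeasureTheory Filter Real

/-- The principal value at `α` of the integral `∫_ℝ F(β) dβ`, understood as the limit of the
integrals over `{β : r < |α − β|}` as `r → 0⁺`. -/
def pvI (F : ℝ → ℝ) (α : ℝ) : ℝ :=
  limUnder (nhdsWithin (0:ℝ) (Ioi 0)) (fun r => ∫ β in {β : ℝ | r < |α - β|}, F β)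

/-- `ψ` is a smooth even cutoff, with values in `[0,1]`, supported in `[−1,1]`,
equal to `1` on `[−1/2,1/2]`. -/
def IsCutoff (ψ : ℝ → ℝ) : Prop :=
  ContDiff ℝ (⊤ : ℕ∞) ψ ∧ (∀ x : ℝ, ψ (-x) = ψ x) ∧ (∀ x : ℝ, ψ x ∈ Icc (0:ℝ) 1) ∧
    (∀ x : ℝ, 1 < |x| → ψ x = 0) ∧ (∀ x : ℝ, |x| ≤ 1/2 → ψ x = 1)

/-- The rescaled cutoff `ψ_r(x) = ψ(x/r)`. -/
def scut (ψ : ℝ → ℝ) (r x : ℝ) : ℝ := ψ (x / r)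

/-- `X̃(α) = 2ε + f(α) + g(α)`. -/
def Xt (ε : ℝ) (f g : ℝ → ℝ) (α : ℝ) : ℝ := 2 * ε + f α + g α

/-- The operator `T_{1,f}`. -/
def T1 (ψ : ℝ → ℝ) (ε : ℝ) (f : ℝ → ℝ) (h : ℝ → ℝ) (α : ℝ) : ℝ :=
  (2 * π)⁻¹ * pvI (fun β =>
    (f α - f β) / ((α - β) ^ 2 + (f α - f β) ^ 2) * h β * scut ψ (Real.sqrt ε) (α - β)) α

/-- The operator `T_{2,f}`. -/
def T2 (ψ : ℝ → ℝ) (ε : ℝ) (f : ℝ → ℝ) (h : ℝ → ℝ) (α : ℝ) : ℝ :=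
  (2 * π)⁻¹ * pvI (fun β =>
    (α - β) / ((α - β) ^ 2 + (f α - f β) ^ 2) * h β * scut ψ (Real.sqrt ε) (α - β)) α

/-- The operator `T_{3,(f,g)}`. -/
def T3 (ψ : ℝ → ℝ) (ε : ℝ) (f g : ℝ → ℝ) (h : ℝ → ℝ) (α : ℝ) : ℝ :=
  (2 * π)⁻¹ * ∫ β : ℝ,
    (2 * ε + f α + g β) / ((α - β) ^ 2 + (2 * ε + f α + g β) ^ 2) * h β *
      scut ψ (Real.sqrt ε) (α - β)

/-- The operator `T_{4,(f,g)}`. -/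
def T4 (ψ : ℝ → ℝ) (ε : ℝ) (f g : ℝ → ℝ) (h : ℝ → ℝ) (α : ℝ) : ℝ :=
  (2 * π)⁻¹ * ∫ β : ℝ,
    (α - β) / ((α - β) ^ 2 + (2 * ε + f α + g β) ^ 2) * h β * scut ψ (Real.sqrt ε) (α - β)

/-- The kernel of the operator `H`. -/
def Hker (ψ : ℝ → ℝ) (ε : ℝ) (f g : ℝ → ℝ) (α β : ℝ) : ℝ :=
  (α - β)⁻¹ * ((Xt ε f g α) ^ 2 / ((α - β) ^ 2 + (Xt ε f g α) ^ 2)) *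
    scut ψ (Real.sqrt ε / 2 ^ 6) α * scut ψ (Real.sqrt ε / 2 ^ 6) (α - β)

/-- The kernel of the operator `M`. -/
def Mker (ψ : ℝ → ℝ) (ε : ℝ) (f g : ℝ → ℝ) (α β : ℝ) : ℝ :=
  (Xt ε f g α) / ((α - β) ^ 2 + (Xt ε f g α) ^ 2) *
    scut ψ (Real.sqrt ε / 2 ^ 6) α * scut ψ (Real.sqrt ε / 2 ^ 6) (α - β)

/-- The operator `H` (a principal value integral in the second variable of the kernel). -/
def Hop (ψ : ℝ → ℝ) (ε : ℝ) (f g : ℝ → ℝ) (h : ℝ → ℝ) (α : ℝ) : ℝ :=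
  (2 * π)⁻¹ * pvI (fun β => Hker ψ ε f g α β * h β) α

/-- The adjoint operator `H*` (integration of the kernel of `H` in its first variable). -/
def Hstar (ψ : ℝ → ℝ) (ε : ℝ) (f g : ℝ → ℝ) (φ : ℝ → ℝ) (β : ℝ) : ℝ :=
  (2 * π)⁻¹ * pvI (fun α => Hker ψ ε f g α β * φ α) β

/-- The operator `M`. -/
def Mop (ψ : ℝ → ℝ) (ε : ℝ) (f g : ℝ → ℝ) (h : ℝ → ℝ) (α : ℝ) : ℝ :=
  (2 * π)⁻¹ * ∫ β : ℝ, Mker ψ ε f g α β * h β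

/-- The adjoint operator `M*` (integration of the kernel of `M` in its first variable). -/
def Mstar (ψ : ℝ → ℝ) (ε : ℝ) (f g : ℝ → ℝ) (φ : ℝ → ℝ) (β : ℝ) : ℝ :=
  (2 * π)⁻¹ * ∫ α : ℝ, Mker ψ ε f g α β * φ α

/-- The class `C₂` of test functions: `C¹` functions compactly supported in `I_δ = (−δ,δ)` with
`|φ⁽ᵏ⁾(α)| ≤ ε/(ε^{2+k} + |α|^{2+k})` on `I_δ` for `k ∈ {0,1}`. -/
def InC2 (δ ε : ℝ) (φ : ℝ → ℝ) : Prop :=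
  ContDiff ℝ 1 φ ∧ HasCompactSupport φ ∧ tsupport φ ⊆ Ioo (-δ) δ ∧
    ∀ α ∈ Ioo (-δ) δ,
      |φ α| ≤ ε / (ε ^ 2 + |α| ^ 2) ∧ |deriv φ α| ≤ ε / (ε ^ 3 + |α| ^ 3)

/-- The standing hypotheses on `f, g : (−δ,δ) → ℝ`: they are `C⁵`, with
`‖f‖_{C³} + ‖g‖_{C³} ≤ A`, `f(0) = f'(0) = g(0) = g'(0) = 0`, and
`f(α) + g(β) ≥ −ε` for `α, β ∈ (−4√ε, 4√ε)`. -/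
def GoodFG (δ A ε : ℝ) (f g : ℝ → ℝ) : Prop :=
  ContDiffOn ℝ 5 f (Ioo (-δ) δ) ∧ ContDiffOn ℝ 5 g (Ioo (-δ) δ) ∧
    f 0 = 0 ∧ g 0 = 0 ∧
    derivWithin f (Ioo (-δ) δ) 0 = 0 ∧ derivWithin g (Ioo (-δ) δ) 0 = 0 ∧
    (∀ x ∈ Ioo (-δ) δ, ∀ i : ℕ, i ≤ 3 →
      |iteratedDerivWithin i f (Ioo (-δ) δ) x| + |iteratedDerivWithin i g (Ioo (-δ) δ) x| ≤ A) ∧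
    (∀ α ∈ Ioo (-(4 * Real.sqrt ε)) (4 * Real.sqrt ε),
      ∀ β ∈ Ioo (-(4 * Real.sqrt ε)) (4 * Real.sqrt ε), -ε ≤ f α + g β)

/-!
The kernels of `H*` and `M*` have the form `k(α, α - β)`, where `α` is integrated out and the
dependence on the first argument comes from the coefficient `2ε + f(α) + g(α)` and the cutoff
`ψ(α)`. Freeze this argument at the point `γ` at which `φ` is evaluated: the frozen kernels are
convolutions, and convolutions commute, so only the errors caused by freezing contribute to the
commutator. Since `f + g` is critical at the origin, a kernel of size `Q(t)` at the scale `ε` moves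
by about `(|γ| + |α - γ|) |α - γ| Q(t) / ε`, and the other kernel absorbs one factor `|α - γ|`. In
the error containing the unfrozen singular kernel, oddness of `1/t` folds the principal value into
a difference of translates by `t` and `-t`, whose `L¹` norm is at most `2t` times that of the
derivative. Both errors thus have `L¹` norm in `β` at most a multiple of
`∫ Q(s) ds · ∫ (|γ| + |s|) Q(s) ds`. Here `Q` and the bound for `φ` are truncated Poisson kernels
at height `ε`, with mass at most `π` and first moment of order `ε log (1/ε)`.
-/

open scoped Topology NNReal ENNReal

section RealAnalysis

lemma abs_sub_le_of_abs_deriv_le_mul_abs {F : ℝ → ℝ} {K : ℝ} (hF : Differentiable ℝ F)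
    (hK : ∀ x, |deriv F x| ≤ K * |x|) (a b : ℝ) :
    |F a - F b| ≤ K * (|b| + |a - b|) * |a - b| := by
  have hK₀ : 0 ≤ K := by simpa using (abs_nonneg _).trans (hK 1)
  refine (convex_uIcc b a).norm_image_sub_le_of_norm_deriv_le (fun x _ => hF x)
    (fun x hx => (hK x).trans ?_) left_mem_uIcc right_mem_uIcc
  have hx : |x - b| ≤ |a - b| := abs_sub_left_of_mem_uIcc hx
  have hx' : |x| ≤ |b| + |x - b| := by simpa using abs_add_le b (x - b)
  gcongr
  linarith

lemma integral_eq_integral_Ioi_add_comp_neg {E : Type*} [NormedAddCommGroup E] [NormedSpace ℝ E]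
    {F : ℝ → E} (hF : Integrable F) : ∫ t, F t = ∫ t in Ioi 0, (F t + F (-t)) := by
  rw [integral_add hF.integrableOn hF.comp_neg.integrableOn, integral_comp_neg_Ioi, neg_zero,
    ← compl_Iic, add_comm, integral_add_compl measurableSet_Iic hF]

lemma lintegral_enorm_add_sub_sub_le {E : Type*} [NormedAddCommGroup E] [NormedSpace ℝ E]
    [CompleteSpace E] {F : ℝ → E} (hF : ContDiff ℝ 1 F) {t : ℝ} (ht : 0 ≤ t) :
    ∫⁻ x, ‖F (x + t) - F (x - t)‖ₑ ≤ ENNReal.ofReal (2 * t) * ∫⁻ x, ‖deriv F x‖ₑ := by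
  have hF' : Continuous (deriv F) := hF.continuous_deriv le_rfl
  have hmeas : Measurable fun x => ‖deriv F x‖ₑ := hF'.enorm.measurable
  have ftc (x : ℝ) : F (x + t) - F (x - t) = ∫ u in (-t)..t, deriv F (x + u) := by
    rw [intervalIntegral.integral_comp_add_left, ← sub_eq_add_neg,
      intervalIntegral.integral_deriv_eq_sub
        (fun y _ => hF.differentiable one_ne_zero y) (hF'.intervalIntegrable _ _)]
  calc ∫⁻ x, ‖F (x + t) - F (x - t)‖ₑ
      ≤ ∫⁻ x, ∫⁻ u in Ioc (-t) t, ‖deriv F (x + u)‖ₑ := by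
        refine lintegral_mono fun x => ?_
        rw [ftc, intervalIntegral.integral_of_le (by linarith)]
        exact enorm_integral_le_lintegral_enorm _
    _ = ∫⁻ u in Ioc (-t) t, ∫⁻ x, ‖deriv F (x + u)‖ₑ :=
        lintegral_lintegral_swap (hmeas.comp (by fun_prop)).aemeasurable
    _ = ∫⁻ _ in Ioc (-t) t, ∫⁻ x, ‖deriv F x‖ₑ :=
        lintegral_congr fun u => lintegral_add_right_eq_self (fun x => ‖deriv F x‖ₑ) u
    _ = ENNReal.ofReal (2 * t) * ∫⁻ x, ‖deriv F x‖ₑ := by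
        rw [setLIntegral_const, Real.volume_Ioc, mul_comm, sub_neg_eq_add, two_mul]

lemma lintegral_lintegral_sub_mul_sub {u v : ℝ → ℝ≥0∞} (hu : Measurable u) (hv : Measurable v)
    (c : ℝ) : ∫⁻ y, ∫⁻ x, u (x - y) * v (c - x) = (∫⁻ x, u x) * ∫⁻ x, v x := by
  rw [lintegral_lintegral_swap (by unfold Function.uncurry; fun_prop)]
  calc ∫⁻ x, ∫⁻ y, u (x - y) * v (c - x) = ∫⁻ x, (∫⁻ y, u y) * v (c - x) := by
        refine lintegral_congr fun x => ?_
        rw [lintegral_mul_const _ (by fun_prop), lintegral_sub_left_eq_self]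
    _ = (∫⁻ x, u x) * ∫⁻ x, v x := by
        rw [lintegral_const_mul _ (by fun_prop), lintegral_sub_left_eq_self]

lemma integral_mul_sub_comm (k l : ℝ → ℝ) (x y : ℝ) :
    ∫ t, k (t - x) * l (y - t) = ∫ t, l (t - x) * k (y - t) := by
  rw [← integral_sub_left_eq_self _ _ (y + x)]
  congr 1 with t
  rw [show y + x - t - x = y - t by ring, show y - (y + x - t) = t - x by ring, mul_comm]

end RealAnalysis

section PrincipalValue

/-- The truncation of `t ↦ t⁻¹` to `r < |t|`, which turns a principal value into a limit of
ordinary integrals as `r → 0⁺`. -/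
def truncInv (r t : ℝ) : ℝ := if r < |t| then t⁻¹ else 0

@[fun_prop]
lemma measurable_truncInv (r : ℝ) : Measurable (truncInv r) :=
  Measurable.ite (measurableSet_lt (by fun_prop) (by fun_prop)) (by fun_prop) measurable_const

lemma truncInv_neg (r t : ℝ) : truncInv r (-t) = -truncInv r t := by
  unfold truncInv
  split_ifs <;> simp_all [inv_neg]

lemma abs_truncInv_le {r : ℝ} (hr : 0 < r) (t : ℝ) : |truncInv r t| ≤ r⁻¹ := by
  unfold truncInv
  split_ifs with h
  · rw [abs_inv]
    exact inv_anti₀ hr h.le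
  · simp [hr.le]

lemma abs_truncInv_mul_abs_le_one (r t : ℝ) : |truncInv r t| * |t| ≤ 1 := by
  unfold truncInv
  split_ifs
  · rw [abs_inv]
    exact inv_mul_le_one
  · simp

lemma integrable_truncInv_mul {F : ℝ → ℝ} (hF : Integrable F) {r : ℝ} (hr : 0 < r) :
    Integrable fun t => truncInv r t * F t :=
  hF.bdd_mul (measurable_truncInv r).aestronglyMeasurable
    (Eventually.of_forall fun t => abs_truncInv_le hr t)

lemma integral_truncInv_mul {F : ℝ → ℝ} (hF : Integrable F) {r : ℝ} (hr : 0 < r) :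
    ∫ t, truncInv r t * F t = ∫ t in Ioi 0, truncInv r t * (F t - F (-t)) := by
  rw [integral_eq_integral_Ioi_add_comp_neg (integrable_truncInv_mul hF hr)]
  simp only [truncInv_neg, neg_mul, ← sub_eq_add_neg, mul_sub]

variable {F g : ℝ → ℝ}

lemma ae_norm_truncInv_mul_le (hg : ∀ t, 0 < t → |F t - F (-t)| ≤ t * g t) (r : ℝ) :
    ∀ᵐ t ∂volume.restrict (Ioi 0), ‖truncInv r t * (F t - F (-t))‖ ≤ g t := by
  filter_upwards [ae_restrict_mem measurableSet_Ioi] with t ht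
  have ht : 0 < t := ht
  have hgt : 0 ≤ g t := nonneg_of_mul_nonneg_right ((abs_nonneg _).trans (hg t ht)) ht
  calc ‖truncInv r t * (F t - F (-t))‖ ≤ |truncInv r t| * (|t| * g t) := by
        rw [Real.norm_eq_abs, abs_mul, abs_of_pos ht]
        gcongr
        exact hg t ht
    _ = |truncInv r t| * |t| * g t := by ring
    _ ≤ g t := mul_le_of_le_one_left hgt (abs_truncInv_mul_abs_le_one r t)

lemma abs_integral_truncInv_mul_le (hF : Integrable F) (hgi : IntegrableOn g (Ioi 0))
    (hg : ∀ t, 0 < t → |F t - F (-t)| ≤ t * g t) {r : ℝ} (hr : 0 < r) :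
    |∫ t, truncInv r t * F t| ≤ ∫ t in Ioi 0, g t := by
  rw [integral_truncInv_mul hF hr, ← Real.norm_eq_abs]
  exact norm_integral_le_of_norm_le hgi (ae_norm_truncInv_mul_le hg r)

lemma tendsto_integral_truncInv_mul (hF : Integrable F) (hgi : IntegrableOn g (Ioi 0))
    (hg : ∀ t, 0 < t → |F t - F (-t)| ≤ t * g t) :
    Tendsto (fun r => ∫ t, truncInv r t * F t) (𝓝[>] 0)
      (𝓝 (∫ t in Ioi 0, t⁻¹ * (F t - F (-t)))) := by
  have hlim : Tendsto (fun r => ∫ t in Ioi 0, truncInv r t * (F t - F (-t))) (𝓝[>] 0)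
      (𝓝 (∫ t in Ioi 0, t⁻¹ * (F t - F (-t)))) := by
    refine tendsto_integral_filter_of_dominated_convergence g (Eventually.of_forall fun r => ?_)
      (Eventually.of_forall fun r => ae_norm_truncInv_mul_le hg r) hgi ?_
    · exact (measurable_truncInv r).aestronglyMeasurable.mul
        (hF.sub hF.comp_neg).aestronglyMeasurable.restrict
    · filter_upwards [ae_restrict_mem measurableSet_Ioi] with t ht
      refine tendsto_const_nhds.congr' ?_
      filter_upwards [mem_nhdsWithin_of_mem_nhds (Iio_mem_nhds ht)] with r (hr : r < t)
      rw [truncInv, if_pos (hr.trans_le (le_abs_self t))]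
  refine hlim.congr' ?_
  filter_upwards [self_mem_nhdsWithin] with r hr
  exact (integral_truncInv_mul hF hr).symm

end PrincipalValue

section KernelOperator

/-- An envelope for convolution kernels: bounded and integrable, with a finite first
absolute moment. -/
structure IsMajorant (Q : ℝ → ℝ) : Prop where
  measurable : Measurable Q
  nonneg : ∀ t, 0 ≤ Q t
  exists_le : ∃ C, ∀ t, Q t ≤ C
  integrable : Integrable Q
  integrable_abs_mul : Integrable fun t => |t| * Q t

lemma IsMajorant.const_mul {Q : ℝ → ℝ} (hQ : IsMajorant Q) {c : ℝ} (hc : 0 ≤ c) :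
    IsMajorant fun t => c * Q t where
  measurable := hQ.measurable.const_mul c
  nonneg t := mul_nonneg hc (hQ.nonneg t)
  exists_le := by
    obtain ⟨C, hC⟩ := hQ.exists_le
    exact ⟨c * C, fun t => mul_le_mul_of_nonneg_left (hC t) hc⟩
  integrable := hQ.integrable.const_mul c
  integrable_abs_mul := by
    simpa only [mul_left_comm] using hQ.integrable_abs_mul.const_mul c

/-- The kernel `k α t`, with coefficient variable `α` and convolution variable `t`, is bounded by
the convolution kernel `Q t`. -/
structure IsDominated (Q : ℝ → ℝ) (k : ℝ → ℝ → ℝ) : Prop where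
  measurable : Measurable (Function.uncurry k)
  abs_le : ∀ α t, |k α t| ≤ Q t

/-- The integral operator `F ↦ (β ↦ ∫ k(α, α - β) F(α) dα)`. The coefficient variable of `k` is
integrated out, as in the adjoint operators `H*` and `M*`. -/
def kernelOp (k : ℝ → ℝ → ℝ) (F : ℝ → ℝ) (β : ℝ) : ℝ := ∫ α, k α (α - β) * F α

/-- The defect at `(γ, β)` in the kernel of `kernelOp a ∘ kernelOp b` caused by freezing the
coefficient variable of `a` at the outer integration point `γ`. -/
def frozenDefect (a b : ℝ → ℝ → ℝ) (γ β : ℝ) : ℝ :=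
  ∫ α, (a α (α - β) - a γ (α - β)) * b γ (γ - α)

variable {Qa Qb φ : ℝ → ℝ} {a b : ℝ → ℝ → ℝ}

lemma kernelOp_const_mul (k : ℝ → ℝ → ℝ) (c : ℝ) (F : ℝ → ℝ) (β : ℝ) :
    kernelOp k (fun α => c * F α) β = c * kernelOp k F β := by
  simp only [kernelOp, mul_left_comm _ c, integral_const_mul]

namespace IsDominated

lemma measurable_comp (ha : IsDominated Qa a) {X : Type*} [MeasurableSpace X] {u v : X → ℝ}
    (hu : Measurable u) (hv : Measurable v) : Measurable fun x => a (u x) (v x) :=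
  ha.measurable.comp (hu.prodMk hv)

lemma integrable_comp_sub_mul (ha : IsDominated Qa a) (hb : IsDominated Qb b)
    (hQa : IsMajorant Qa) (hQb : IsMajorant Qb) {u : ℝ → ℝ} (hu : Measurable u) (β γ : ℝ) :
    Integrable fun α => a (u α) (α - β) * b γ (γ - α) := by
  obtain ⟨C, hC⟩ := hQb.exists_le
  have ha' := ha.measurable_comp hu (measurable_id.sub_const β)
  have hb' : Measurable fun α => b γ (γ - α) :=
    hb.measurable_comp measurable_const (by fun_prop)
  refine (Integrable.mono' (hQa.integrable.comp_sub_right β) ha'.aestronglyMeasurable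
    (Eventually.of_forall fun α => ha.abs_le _ _)).mul_bdd (c := C) hb'.aestronglyMeasurable
    (Eventually.of_forall fun α => (hb.abs_le _ _).trans (hC _))

lemma integrable_prod (ha : IsDominated Qa a) (hb : IsDominated Qb b) (hQa : IsMajorant Qa)
    (hQb : IsMajorant Qb) (hφ : Integrable φ) (β : ℝ) :
    Integrable (Function.uncurry fun α γ => a α (α - β) * (b γ (γ - α) * φ γ))
      (volume.prod volume) := by
  obtain ⟨C, hC⟩ := hQb.exists_le
  have hint := (hQa.integrable.comp_sub_right β).mul_prod (hφ.abs.const_mul C)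
  refine hint.mono' (AEStronglyMeasurable.mul ?_ (.mul ?_ hφ.1.comp_snd))
    (Eventually.of_forall fun x => ?_)
  · exact (ha.measurable_comp (by fun_prop) (by fun_prop)).aestronglyMeasurable
  · exact (hb.measurable_comp (by fun_prop) (by fun_prop)).aestronglyMeasurable
  · simp only [Function.uncurry, norm_mul, Real.norm_eq_abs]
    gcongr
    · exact hQa.nonneg _
    · exact ha.abs_le _ _
    · exact (hb.abs_le _ _).trans (hC _)

end IsDominated

lemma kernelOp_comp (ha : IsDominated Qa a) (hb : IsDominated Qb b) (hQa : IsMajorant Qa)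
    (hQb : IsMajorant Qb) (hφ : Integrable φ) (β : ℝ) :
    kernelOp a (kernelOp b φ) β = ∫ γ, (∫ α, a α (α - β) * b γ (γ - α)) * φ γ := by
  simp only [kernelOp, ← integral_const_mul]
  rw [integral_integral_swap (ha.integrable_prod hb hQa hQb hφ β)]
  simp only [← mul_assoc, integral_mul_const]

lemma integrable_integral_mul (ha : IsDominated Qa a) (hb : IsDominated Qb b)
    (hQa : IsMajorant Qa) (hQb : IsMajorant Qb) (hφ : Integrable φ) (β : ℝ) :
    Integrable fun γ => (∫ α, a α (α - β) * b γ (γ - α)) * φ γ := by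
  simpa only [Function.uncurry, ← mul_assoc, integral_mul_const] using
    (ha.integrable_prod hb hQa hQb hφ β).integral_prod_right

lemma frozenDefect_eq_sub (ha : IsDominated Qa a) (hb : IsDominated Qb b) (hQa : IsMajorant Qa)
    (hQb : IsMajorant Qb) (γ β : ℝ) :
    frozenDefect a b γ β =
      (∫ α, a α (α - β) * b γ (γ - α)) - ∫ α, a γ (α - β) * b γ (γ - α) := by
  simp only [frozenDefect, sub_mul]
  exact integral_sub (ha.integrable_comp_sub_mul hb hQa hQb measurable_id β γ)
    (ha.integrable_comp_sub_mul hb hQa hQb measurable_const β γ)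

-- The two compositions with frozen coefficients are convolutions, so they cancel.
lemma kernelOp_commutator (ha : IsDominated Qa a) (hb : IsDominated Qb b) (hQa : IsMajorant Qa)
    (hQb : IsMajorant Qb) (hφ : Integrable φ) (β : ℝ) :
    kernelOp a (kernelOp b φ) β - kernelOp b (kernelOp a φ) β =
      ∫ γ, (frozenDefect a b γ β - frozenDefect b a γ β) * φ γ := by
  rw [kernelOp_comp ha hb hQa hQb hφ, kernelOp_comp hb ha hQb hQa hφ,
    ← integral_sub (integrable_integral_mul ha hb hQa hQb hφ β)
      (integrable_integral_mul hb ha hQb hQa hφ β)]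
  refine integral_congr_ae (Eventually.of_forall fun γ => ?_)
  simp only
  rw [frozenDefect_eq_sub ha hb hQa hQb, frozenDefect_eq_sub hb ha hQb hQa,
    integral_mul_sub_comm (b γ) (a γ)]
  ring

lemma measurable_frozenDefect (ha : IsDominated Qa a) (hb : IsDominated Qb b) :
    Measurable (Function.uncurry (frozenDefect a b)) := by
  have : Measurable (Function.uncurry fun (x : ℝ × ℝ) α =>
      (a α (α - x.2) - a x.1 (α - x.2)) * b x.1 (x.1 - α)) :=
    ((ha.measurable_comp (by fun_prop) (by fun_prop)).sub
      (ha.measurable_comp (by fun_prop) (by fun_prop))).mul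
      (hb.measurable_comp (by fun_prop) (by fun_prop))
  exact this.stronglyMeasurable.integral_prod_right.measurable

lemma measurable_kernelOp (ha : IsDominated Qa a) {F : ℝ → ℝ} (hF : Measurable F) :
    Measurable (kernelOp a F) := by
  have : Measurable (Function.uncurry fun β α => a α (α - β) * F α) :=
    (ha.measurable_comp (by fun_prop) (by fun_prop)).mul (hF.comp measurable_snd)
  exact this.stronglyMeasurable.integral_prod_right.measurable

lemma lintegral_kernelOp_commutator_le (ha : IsDominated Qa a) (hb : IsDominated Qb b)
    (hQa : IsMajorant Qa) (hQb : IsMajorant Qb) (hφ : Integrable φ) :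
    ∫⁻ β, ‖kernelOp a (kernelOp b φ) β - kernelOp b (kernelOp a φ) β‖ₑ ≤
      ∫⁻ γ, ((∫⁻ β, ‖frozenDefect a b γ β‖ₑ) + ∫⁻ β, ‖frozenDefect b a γ β‖ₑ) * ‖φ γ‖ₑ := by
  have hab := (measurable_frozenDefect ha hb).enorm
  have hba := (measurable_frozenDefect hb ha).enorm
  calc ∫⁻ β, ‖kernelOp a (kernelOp b φ) β - kernelOp b (kernelOp a φ) β‖ₑ
      ≤ ∫⁻ β, ∫⁻ γ, (‖frozenDefect a b γ β‖ₑ + ‖frozenDefect b a γ β‖ₑ) * ‖φ γ‖ₑ := by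
        refine lintegral_mono fun β => ?_
        rw [kernelOp_commutator ha hb hQa hQb hφ]
        refine (enorm_integral_le_lintegral_enorm _).trans (lintegral_mono fun γ => ?_)
        rw [enorm_mul]
        gcongr
        exact enorm_sub_le
    _ = ∫⁻ γ, ∫⁻ β, (‖frozenDefect a b γ β‖ₑ + ‖frozenDefect b a γ β‖ₑ) * ‖φ γ‖ₑ :=
        lintegral_lintegral_swap <| AEMeasurable.mul
          ((hab.comp measurable_swap).add (hba.comp measurable_swap)).aemeasurable
          hφ.1.comp_snd.enorm
    _ = _ := by
        refine lintegral_congr fun γ => ?_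
        have hab' := hab.comp (measurable_prodMk_left (x := γ))
        have hba' := hba.comp (measurable_prodMk_left (x := γ))
        exact (lintegral_mul_const _ (hab'.add hba')).trans
          (congrArg (· * _) (lintegral_add_left hab' _))

end KernelOperator

section Weights

variable {ε r : ℝ} {Q : ℝ → ℝ} {p q : ℝ → ℝ → ℝ}

/-- A weight `p` that makes `p α t / t` a singular kernel of the type of `H`: it is even in the
convolution variable `t`, of size `ε Q(t)`, and it varies with the coefficient variable `α` at the
rate `|α| Q(t)`. -/
structure IsHilbertWeight (ε : ℝ) (Q : ℝ → ℝ) (p : ℝ → ℝ → ℝ) : Prop where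
  measurable : Measurable (Function.uncurry p)
  even : ∀ α t, p α (-t) = p α t
  abs_le : ∀ α t, |p α t| ≤ ε * Q t
  contDiff : ∀ t, ContDiff ℝ 1 fun α => p α t
  abs_deriv_le : ∀ α t, |deriv (fun α => p α t) α| ≤ Q t * |α|

/-- A kernel `q` of the type of `M`, that is, of a truncated Poisson kernel at height `ε`: of size
`Q(t)`, with the derivatives that this size and the scale `ε` suggest. -/
structure IsPoissonWeight (ε : ℝ) (Q : ℝ → ℝ) (q : ℝ → ℝ → ℝ) : Prop extends
    IsDominated Q q where
  differentiable_left : ∀ t, Differentiable ℝ fun α => q α t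
  abs_deriv_left_le : ∀ α t, |deriv (fun α => q α t) α| ≤ Q t / ε * |α|
  contDiff_right : ∀ α, ContDiff ℝ 1 (q α)
  abs_deriv_right_le : ∀ α t, (ε + |t|) * |deriv (q α) t| ≤ Q t

/-- The singular kernel `p α t / t`, truncated to `r < |t|`. -/
def truncKernel (r : ℝ) (p : ℝ → ℝ → ℝ) (α t : ℝ) : ℝ := truncInv r t * p α t

/-- The integral operator with the singular kernel `p α t / t`, as a principal value. -/
def pvKernelOp (p : ℝ → ℝ → ℝ) (F : ℝ → ℝ) (β : ℝ) : ℝ :=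
  limUnder (𝓝[>] 0) fun r => kernelOp (truncKernel r p) F β

/-- The first absolute moment of `Q`, with weight shifted by `|γ|`. -/
def shiftedMoment (Q : ℝ → ℝ) (γ : ℝ) : ℝ≥0∞ := ∫⁻ s, ENNReal.ofReal ((|γ| + |s|) * Q s)

namespace IsHilbertWeight

lemma abs_sub_le (hp : IsHilbertWeight ε Q p) (α γ t : ℝ) :
    |p α t - p γ t| ≤ Q t * (|γ| + |α - γ|) * |α - γ| :=
  abs_sub_le_of_abs_deriv_le_mul_abs ((hp.contDiff t).differentiable one_ne_zero)
    (fun x => hp.abs_deriv_le x t) α γ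

lemma isDominated_truncKernel (hp : IsHilbertWeight ε Q p) (hr : 0 < r) :
    IsDominated (fun t => r⁻¹ * ε * Q t) (truncKernel r p) where
  measurable := ((measurable_truncInv r).comp measurable_snd).mul hp.measurable
  abs_le α t := by
    rw [truncKernel, abs_mul, mul_assoc]
    exact mul_le_mul (abs_truncInv_le hr t) (hp.abs_le α t) (abs_nonneg _) (by positivity)

end IsHilbertWeight

lemma IsPoissonWeight.abs_sub_le (hq : IsPoissonWeight ε Q q) (α γ t : ℝ) :
    |q α t - q γ t| ≤ Q t / ε * (|γ| + |α - γ|) * |α - γ| :=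
  abs_sub_le_of_abs_deriv_le_mul_abs (hq.differentiable_left t)
    (fun x => hq.abs_deriv_left_le x t) α γ

lemma lintegral_enorm_frozenDefect_truncKernel_right_le (hε : 0 < ε) (hQ : IsMajorant Q)
    (hp : IsHilbertWeight ε Q p) (hq : IsPoissonWeight ε Q q) (γ : ℝ) :
    ∫⁻ β, ‖frozenDefect q (truncKernel r p) γ β‖ₑ ≤
      (∫⁻ t, ENNReal.ofReal (Q t)) * shiftedMoment Q γ := by
  have hQm := hQ.measurable
  have key (α β : ℝ) : ‖(q α (α - β) - q γ (α - β)) * truncKernel r p γ (γ - α)‖ₑ ≤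
      ENNReal.ofReal (Q (α - β)) * ENNReal.ofReal ((|γ| + |γ - α|) * Q (γ - α)) := by
    have hQt := hQ.nonneg (α - β)
    have hQs := hQ.nonneg (γ - α)
    rw [← ENNReal.ofReal_mul (hQ.nonneg _), enorm_eq_ofReal_abs]
    refine ENNReal.ofReal_le_ofReal ?_
    rw [abs_mul, truncKernel, abs_mul]
    calc |q α (α - β) - q γ (α - β)| * (|truncInv r (γ - α)| * |p γ (γ - α)|)
        ≤ Q (α - β) / ε * (|γ| + |γ - α|) * |γ - α| *
            (|truncInv r (γ - α)| * (ε * Q (γ - α))) := by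
          gcongr
          · rw [abs_sub_comm γ]
            exact hq.abs_sub_le _ _ _
          · exact hp.abs_le _ _
      _ = Q (α - β) * ((|γ| + |γ - α|) * Q (γ - α)) * (|truncInv r (γ - α)| * |γ - α|) := by
          field_simp
      _ ≤ Q (α - β) * ((|γ| + |γ - α|) * Q (γ - α)) :=
          mul_le_of_le_one_right (mul_nonneg (hQ.nonneg _) (by positivity))
            (abs_truncInv_mul_abs_le_one _ _)
  calc ∫⁻ β, ‖frozenDefect q (truncKernel r p) γ β‖ₑ
      ≤ ∫⁻ β, ∫⁻ α, ENNReal.ofReal (Q (α - β)) *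
          ENNReal.ofReal ((|γ| + |γ - α|) * Q (γ - α)) :=
        lintegral_mono fun β => (enorm_integral_le_lintegral_enorm _).trans
          (lintegral_mono fun α => key α β)
    _ = _ := lintegral_lintegral_sub_mul_sub (u := fun t => ENNReal.ofReal (Q t))
          (v := fun s => ENNReal.ofReal ((|γ| + |s|) * Q s)) (by fun_prop) (by fun_prop) γ

lemma frozenDefect_truncKernel_left (hr : 0 < r) (hQ : IsMajorant Q) (hp : IsHilbertWeight ε Q p)
    (hq : IsPoissonWeight ε Q q) (γ β : ℝ) :
    frozenDefect (truncKernel r p) q γ β = ∫ t in Ioi 0, truncInv r t *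
      (q γ (γ - (β + t)) * (p (β + t) t - p γ t) - q γ (γ - (β - t)) * (p (β - t) t - p γ t)) := by
  obtain ⟨C, hC⟩ := hQ.exists_le
  have hint : Integrable fun t => q γ (γ - (β + t)) * (p (β + t) t - p γ t) := by
    have hp' : Integrable fun t => p (β + t) t - p γ t := by
      refine (hQ.integrable.const_mul (2 * ε)).mono' ?_ (Eventually.of_forall fun t => ?_)
      · exact ((hp.measurable.comp (by fun_prop : Measurable fun t => (β + t, t))).sub
          (hp.measurable.comp (by fun_prop : Measurable fun t => (γ, t)))).aestronglyMeasurable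
      · calc |p (β + t) t - p γ t| ≤ |p (β + t) t| + |p γ t| := abs_sub _ _
          _ ≤ 2 * ε * Q t := by linarith [hp.abs_le (β + t) t, hp.abs_le γ t]
    exact hp'.bdd_mul (c := C)
      (hq.measurable_comp measurable_const (by fun_prop)).aestronglyMeasurable
      (Eventually.of_forall fun t => (hq.abs_le _ _).trans (hC _))
  calc frozenDefect (truncKernel r p) q γ β
      = ∫ t, truncInv r t * (q γ (γ - (β + t)) * (p (β + t) t - p γ t)) := by
        rw [frozenDefect, ← integral_add_left_eq_self _ β]
        congr 1 with t
        rw [add_sub_cancel_left, truncKernel, truncKernel]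
        ring
    _ = _ := by
        rw [integral_truncInv_mul hint hr]
        simp only [hp.even, ← sub_eq_add_neg]

lemma contDiff_mul_sub (hp : IsHilbertWeight ε Q p) (hq : IsPoissonWeight ε Q q) (γ t : ℝ) :
    ContDiff ℝ 1 fun α => q γ (γ - α) * (p α t - p γ t) :=
  ((hq.contDiff_right γ).comp (contDiff_const.sub contDiff_id)).mul
    ((hp.contDiff t).sub contDiff_const)

lemma abs_deriv_mul_sub_le (hε : 0 ≤ ε) (hQ : IsMajorant Q) (hp : IsHilbertWeight ε Q p)
    (hq : IsPoissonWeight ε Q q) (γ t α : ℝ) :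
    |deriv (fun α => q γ (γ - α) * (p α t - p γ t)) α| ≤
      2 * Q t * ((|γ| + |γ - α|) * Q (γ - α)) := by
  have hQt := hQ.nonneg t
  have hQs := hQ.nonneg (γ - α)
  have hp' : HasDerivAt (fun α => p α t - p γ t) (deriv (fun α => p α t) α) α :=
    ((hp.contDiff t).differentiable one_ne_zero α).hasDerivAt.sub_const _
  have hq' : HasDerivAt (fun α => q γ (γ - α)) (-deriv (q γ) (γ - α)) α :=
    (((hq.contDiff_right γ).differentiable one_ne_zero _).hasDerivAt).comp_const_sub γ α
  have hα : |α| ≤ |γ| + |γ - α| := by simpa using abs_sub γ (γ - α)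
  have hqs : |γ - α| * |deriv (q γ) (γ - α)| ≤ Q (γ - α) :=
    le_trans (by gcongr; exact le_add_of_nonneg_left hε) (hq.abs_deriv_right_le γ (γ - α))
  rw [(hq'.fun_mul hp').deriv]
  calc |-deriv (q γ) (γ - α) * (p α t - p γ t) + q γ (γ - α) * deriv (fun α => p α t) α|
      ≤ |deriv (q γ) (γ - α)| * |p α t - p γ t| +
          |q γ (γ - α)| * |deriv (fun α => p α t) α| := by
        rw [← abs_mul, ← abs_mul, ← abs_neg (_ * (p α t - p γ t)), ← neg_mul]
        exact abs_add_le _ _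
    _ ≤ |deriv (q γ) (γ - α)| * (Q t * (|γ| + |γ - α|) * |γ - α|) +
          Q (γ - α) * (Q t * (|γ| + |γ - α|)) := by
        gcongr
        · rw [abs_sub_comm γ]
          exact hp.abs_sub_le α γ t
        · exact hq.abs_le _ _
        · exact (hp.abs_deriv_le α t).trans (by gcongr)
    _ = Q t * (|γ| + |γ - α|) * (|γ - α| * |deriv (q γ) (γ - α)|) +
          Q t * (|γ| + |γ - α|) * Q (γ - α) := by ring
    _ ≤ Q t * (|γ| + |γ - α|) * Q (γ - α) + Q t * (|γ| + |γ - α|) * Q (γ - α) := by gcongr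
    _ = 2 * Q t * ((|γ| + |γ - α|) * Q (γ - α)) := by ring

lemma lintegral_enorm_fold_le (hε : 0 ≤ ε) (hQ : IsMajorant Q) (hp : IsHilbertWeight ε Q p)
    (hq : IsPoissonWeight ε Q q) (γ : ℝ) {t : ℝ} (ht : 0 < t) :
    ∫⁻ β, ‖truncInv r t * (q γ (γ - (β + t)) * (p (β + t) t - p γ t) -
        q γ (γ - (β - t)) * (p (β - t) t - p γ t))‖ₑ ≤
      ENNReal.ofReal (4 * Q t) * shiftedMoment Q γ := by
  have hQm := hQ.measurable
  have hQt := hQ.nonneg t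
  set G : ℝ → ℝ := fun α => q γ (γ - α) * (p α t - p γ t)
  have hG' : ∫⁻ α, ‖deriv G α‖ₑ ≤ ENNReal.ofReal (2 * Q t) * shiftedMoment Q γ := by
    rw [shiftedMoment, ← lintegral_sub_left_eq_self (fun s => ENNReal.ofReal _) γ,
      ← lintegral_const_mul _ (by fun_prop)]
    refine lintegral_mono fun α => ?_
    rw [← ENNReal.ofReal_mul (by positivity), enorm_eq_ofReal_abs]
    exact ENNReal.ofReal_le_ofReal (abs_deriv_mul_sub_le hε hQ hp hq γ t α)
  calc ∫⁻ β, ‖truncInv r t * (G (β + t) - G (β - t))‖ₑ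
      = ‖truncInv r t‖ₑ * ∫⁻ β, ‖G (β + t) - G (β - t)‖ₑ := by
        simp only [enorm_mul]
        exact lintegral_const_mul' _ _ enorm_ne_top
    _ ≤ ‖truncInv r t‖ₑ * (ENNReal.ofReal (2 * t) *
          (ENNReal.ofReal (2 * Q t) * shiftedMoment Q γ)) := by
        gcongr
        exact (lintegral_enorm_add_sub_sub_le (contDiff_mul_sub hp hq γ t) ht.le).trans
          (by gcongr)
    _ = ENNReal.ofReal (|truncInv r t| * |t| * (4 * Q t)) * shiftedMoment Q γ := by
        rw [enorm_eq_ofReal_abs, ← mul_assoc, ← mul_assoc, ← ENNReal.ofReal_mul (by positivity),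
          ← ENNReal.ofReal_mul (by positivity), abs_of_pos ht]
        ring_nf
    _ ≤ ENNReal.ofReal (4 * Q t) * shiftedMoment Q γ := by
        refine mul_le_mul_left (ENNReal.ofReal_le_ofReal ?_) _
        exact mul_le_of_le_one_left (by positivity) (abs_truncInv_mul_abs_le_one r t)

lemma lintegral_enorm_frozenDefect_truncKernel_left_le (hε : 0 ≤ ε) (hr : 0 < r)
    (hQ : IsMajorant Q) (hp : IsHilbertWeight ε Q p) (hq : IsPoissonWeight ε Q q) (γ : ℝ) :
    ∫⁻ β, ‖frozenDefect (truncKernel r p) q γ β‖ₑ ≤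
      4 * (∫⁻ t, ENNReal.ofReal (Q t)) * shiftedMoment Q γ := by
  have hQm := hQ.measurable
  have hpm {u v : ℝ × ℝ → ℝ} (hu : Measurable u) (hv : Measurable v) :
      Measurable fun x => p (u x) (v x) := hp.measurable.comp (hu.prodMk hv)
  have hqm {v : ℝ × ℝ → ℝ} (hv : Measurable v) : Measurable fun x => q γ (v x) :=
    hq.measurable_comp measurable_const hv
  calc ∫⁻ β, ‖frozenDefect (truncKernel r p) q γ β‖ₑ
      ≤ ∫⁻ β, ∫⁻ t in Ioi 0, ‖truncInv r t * (q γ (γ - (β + t)) * (p (β + t) t - p γ t) -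
          q γ (γ - (β - t)) * (p (β - t) t - p γ t))‖ₑ := by
        refine lintegral_mono fun β => ?_
        rw [frozenDefect_truncKernel_left hr hQ hp hq]
        exact enorm_integral_le_lintegral_enorm _
    _ = ∫⁻ t in Ioi 0, ∫⁻ β, ‖truncInv r t * (q γ (γ - (β + t)) * (p (β + t) t - p γ t) -
          q γ (γ - (β - t)) * (p (β - t) t - p γ t))‖ₑ := by
        refine lintegral_lintegral_swap (Measurable.enorm ?_).aemeasurable
        refine ((measurable_truncInv r).comp measurable_snd).mul (.sub (.mul ?_ (.sub ?_ ?_))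
          (.mul ?_ (.sub ?_ ?_)))
        all_goals first | exact hqm (by fun_prop) | exact hpm (by fun_prop) (by fun_prop)
    _ ≤ ∫⁻ t in Ioi 0, ENNReal.ofReal (4 * Q t) * shiftedMoment Q γ :=
        setLIntegral_mono (by fun_prop) fun t ht => lintegral_enorm_fold_le hε hQ hp hq γ ht
    _ ≤ ∫⁻ t, ENNReal.ofReal (4 * Q t) * shiftedMoment Q γ := setLIntegral_le_lintegral _ _
    _ = 4 * (∫⁻ t, ENNReal.ofReal (Q t)) * shiftedMoment Q γ := by
        simp only [ENNReal.ofReal_mul (zero_le_four (α := ℝ)), ENNReal.ofReal_ofNat]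
        rw [lintegral_mul_const _ (by fun_prop), lintegral_const_mul _ (by fun_prop)]

end Weights

section PrincipalValueOperator

variable {ε r C : ℝ} {L : ℝ≥0} {Q F φ : ℝ → ℝ} {p q : ℝ → ℝ → ℝ}

/-- Up to the factor `1 + |β|`, a bound for the difference quotients at `β` of the folded integrand
of `pvKernelOp p F`, for `F` bounded by `C` with Lipschitz constant `L`. -/
def pvMajorant (ε : ℝ) (Q : ℝ → ℝ) (C L t : ℝ) : ℝ := 2 * (C * (1 + 3 * |t|) + ε * L) * Q t

lemma IsMajorant.integrable_pvMajorant (hQ : IsMajorant Q) (ε C L : ℝ) :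
    Integrable (pvMajorant ε Q C L) := by
  refine ((hQ.integrable.const_mul (2 * (C + ε * L))).add
    (hQ.integrable_abs_mul.const_mul (6 * C))).congr (Eventually.of_forall fun t => ?_)
  simp only [pvMajorant, Pi.add_apply]
  ring

lemma kernelOp_truncKernel (r : ℝ) (p : ℝ → ℝ → ℝ) (F : ℝ → ℝ) (β : ℝ) :
    kernelOp (truncKernel r p) F β = ∫ t, truncInv r t * (p (β + t) t * F (β + t)) := by
  rw [kernelOp, ← integral_add_left_eq_self _ β]
  simp only [truncKernel, add_sub_cancel_left, mul_assoc]

namespace IsHilbertWeight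

lemma integrable_mul_comp_add (hp : IsHilbertWeight ε Q p) (hQ : IsMajorant Q)
    (hF : Measurable F) (hFC : ∀ x, |F x| ≤ C) (β : ℝ) :
    Integrable fun t => p (β + t) t * F (β + t) := by
  have hpm : Measurable fun t => p (β + t) t :=
    hp.measurable.comp (by fun_prop : Measurable fun t => (β + t, t))
  exact ((hQ.integrable.const_mul ε).mono' hpm.aestronglyMeasurable
    (Eventually.of_forall fun t => hp.abs_le _ _)).mul_bdd (c := C)
    (hF.comp (measurable_const_add β)).aestronglyMeasurable (Eventually.of_forall fun t => hFC _)

lemma abs_sub_le_mul_pvMajorant (hp : IsHilbertWeight ε Q p) (hε : 0 ≤ ε) (hQ : IsMajorant Q)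
    (hFC : ∀ x, |F x| ≤ C) (hFL : LipschitzWith L F) (β : ℝ) {t : ℝ} (ht : 0 < t) :
    |p (β + t) t * F (β + t) - p (β + -t) (-t) * F (β + -t)| ≤
      t * ((1 + |β|) * pvMajorant ε Q C L t) := by
  have hQt := hQ.nonneg t
  have hC : 0 ≤ C := (abs_nonneg _).trans (hFC 0)
  have hdist : |β + t - (β + -t)| = 2 * t := by
    rw [show β + t - (β + -t) = 2 * t by ring, abs_of_pos (by positivity)]
  have hβ : |β + -t| ≤ |β| + t := (abs_add_le _ _).trans_eq (by rw [abs_neg, abs_of_pos ht])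
  have hF' : |F (β + t) - F (β + -t)| ≤ L * (2 * t) := by
    simpa only [Real.dist_eq, hdist] using hFL.dist_le_mul (β + t) (β + -t)
  have hp' : |p (β + t) t - p (β + -t) t| ≤ Q t * (|β| + 3 * t) * (2 * t) := by
    refine (hp.abs_sub_le _ _ t).trans ?_
    rw [hdist]
    gcongr Q t * ?_ * _
    linarith
  rw [hp.even]
  calc |p (β + t) t * F (β + t) - p (β + -t) t * F (β + -t)|
      = |(p (β + t) t - p (β + -t) t) * F (β + t) +
          p (β + -t) t * (F (β + t) - F (β + -t))| := by ring_nf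
    _ ≤ |p (β + t) t - p (β + -t) t| * |F (β + t)| +
          |p (β + -t) t| * |F (β + t) - F (β + -t)| := by
        simp only [← abs_mul]
        exact abs_add_le _ _
    _ ≤ Q t * (|β| + 3 * t) * (2 * t) * C + ε * Q t * (L * (2 * t)) := by
        gcongr
        · exact hFC _
        · exact hp.abs_le _ _
    _ = t * ((C * (|β| + 3 * t) + ε * L) * (2 * Q t)) := by ring
    _ ≤ t * ((1 + |β|) * (C * (1 + 3 * t) + ε * L) * (2 * Q t)) := by
        gcongr _ * (?_ * _)
        have : 0 ≤ C + 3 * t * |β| * C + |β| * (ε * L) := by positivity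
        linarith
    _ = t * ((1 + |β|) * pvMajorant ε Q C L t) := by
        rw [pvMajorant, abs_of_pos ht]
        ring

lemma abs_kernelOp_truncKernel_le (hp : IsHilbertWeight ε Q p) (hε : 0 ≤ ε)
    (hQ : IsMajorant Q) (hFC : ∀ x, |F x| ≤ C) (hFL : LipschitzWith L F) (hr : 0 < r) (β : ℝ) :
    |kernelOp (truncKernel r p) F β| ≤ (1 + |β|) * ∫ t in Ioi 0, pvMajorant ε Q C L t := by
  rw [kernelOp_truncKernel, ← integral_const_mul]
  exact abs_integral_truncInv_mul_le (hp.integrable_mul_comp_add hQ hFL.continuous.measurable hFC β)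
    ((hQ.integrable_pvMajorant ε C L).const_mul _).integrableOn
    (fun t ht => hp.abs_sub_le_mul_pvMajorant hε hQ hFC hFL β ht) hr

lemma tendsto_kernelOp_truncKernel (hp : IsHilbertWeight ε Q p) (hε : 0 ≤ ε)
    (hQ : IsMajorant Q) (hFC : ∀ x, |F x| ≤ C) (hFL : LipschitzWith L F) (β : ℝ) :
    Tendsto (fun r => kernelOp (truncKernel r p) F β) (𝓝[>] 0) (𝓝 (pvKernelOp p F β)) := by
  have hlim := tendsto_integral_truncInv_mul
    (hp.integrable_mul_comp_add hQ hFL.continuous.measurable hFC β)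
    ((hQ.integrable_pvMajorant ε C L).const_mul _).integrableOn
    (fun t ht => hp.abs_sub_le_mul_pvMajorant hε hQ hFC hFL β ht)
  simp only [← kernelOp_truncKernel] at hlim
  exact tendsto_nhds_limUnder ⟨_, hlim⟩

end IsHilbertWeight

lemma IsHilbertWeight.pvKernelOp_const_mul (hp : IsHilbertWeight ε Q p) (hε : 0 ≤ ε)
    (hQ : IsMajorant Q) (hFC : ∀ x, |F x| ≤ C) (hFL : LipschitzWith L F) (c β : ℝ) :
    pvKernelOp p (fun α => c * F α) β = c * pvKernelOp p F β := by
  rw [pvKernelOp]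
  simp only [kernelOp_const_mul]
  exact ((hp.tendsto_kernelOp_truncKernel hε hQ hFC hFL β).const_mul c).limUnder_eq

lemma abs_kernelOp_le {k : ℝ → ℝ → ℝ} (hk : IsDominated Q k) (hQ : IsMajorant Q)
    (hFC : ∀ x, |F x| ≤ C) (β : ℝ) : |kernelOp k F β| ≤ (∫ t, Q t) * C := by
  rw [← integral_sub_right_eq_self Q β, ← integral_mul_const, kernelOp, ← Real.norm_eq_abs]
  refine norm_integral_le_of_norm_le ((hQ.integrable.comp_sub_right β).mul_const C)
    (Eventually.of_forall fun α => ?_)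
  rw [norm_mul]
  exact mul_le_mul (hk.abs_le _ _) (hFC _) (norm_nonneg _) (hQ.nonneg _)

lemma IsDominated.integrable_mul {k : ℝ → ℝ → ℝ} (hk : IsDominated Q k)
    (hQ : IsMajorant Q) (hF : Integrable F) (β : ℝ) :
    Integrable fun α => k α (α - β) * F α := by
  obtain ⟨K, hK⟩ := hQ.exists_le
  exact hF.bdd_mul (c := K) (hk.measurable_comp measurable_id (by fun_prop)).aestronglyMeasurable
    (Eventually.of_forall fun α => (hk.abs_le _ _).trans (hK _))

lemma IsPoissonWeight.exists_lipschitzWith_kernelOp (hq : IsPoissonWeight ε Q q) (hε : 0 < ε)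
    (hQ : IsMajorant Q) (hF : Integrable F) : ∃ K, LipschitzWith K (kernelOp q F) := by
  obtain ⟨B, hB⟩ := hQ.exists_le
  have hB₀ : 0 ≤ B := (hQ.nonneg 0).trans (hB 0)
  have hderiv (α t : ℝ) : |deriv (q α) t| ≤ B / ε := by
    rw [le_div_iff₀' hε]
    refine le_trans ?_ ((hq.abs_deriv_right_le α t).trans (hB t))
    gcongr
    exact le_add_of_nonneg_right (abs_nonneg t)
  have hlip (α s t : ℝ) : |q α s - q α t| ≤ B / ε * |s - t| :=
    convex_univ.norm_image_sub_le_of_norm_deriv_le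
      (fun x _ => (hq.contDiff_right α).differentiable one_ne_zero x) (fun x _ => hderiv α x)
      (mem_univ t) (mem_univ s)
  refine ⟨Real.toNNReal (B / ε * ∫ α, |F α|), LipschitzWith.of_dist_le_mul fun x y => ?_⟩
  rw [Real.coe_toNNReal _ (mul_nonneg (by positivity) (integral_nonneg fun _ => abs_nonneg _)),
    Real.dist_eq, Real.dist_eq, kernelOp, kernelOp,
    ← integral_sub (hq.integrable_mul hQ hF x) (hq.integrable_mul hQ hF y),
    mul_right_comm, ← integral_const_mul, ← Real.norm_eq_abs]
  refine norm_integral_le_of_norm_le (hF.abs.const_mul _) (Eventually.of_forall fun α => ?_)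
  rw [← sub_mul, norm_mul]
  refine mul_le_mul_of_nonneg_right ((hlip α _ _).trans_eq ?_) (abs_nonneg _)
  rw [sub_sub_sub_cancel_left, abs_sub_comm]

lemma tendsto_kernelOp_kernelOp_truncKernel (hε : 0 ≤ ε) (hQ : IsMajorant Q)
    (hp : IsHilbertWeight ε Q p) (hk : IsDominated Q q)
    (hφC : ∀ x, |φ x| ≤ C) (hφL : LipschitzWith L φ) (β : ℝ) :
    Tendsto (fun r => kernelOp q (kernelOp (truncKernel r p) φ) β) (𝓝[>] 0)
      (𝓝 (kernelOp q (pvKernelOp p φ) β)) := by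
  set K := ∫ t in Ioi 0, pvMajorant ε Q C L t
  have hbound (α : ℝ) {r : ℝ} (hr : 0 < r) :
      ‖q α (α - β) * kernelOp (truncKernel r p) φ α‖ ≤
        K * ((1 + |β|) * Q (α - β) + |α - β| * Q (α - β)) := by
    have hQα := hQ.nonneg (α - β)
    have hK := (abs_nonneg _).trans (hp.abs_kernelOp_truncKernel_le hε hQ hφC hφL hr 0)
    rw [abs_zero, add_zero, one_mul] at hK
    have hα : |α| ≤ |β| + |α - β| := by simpa using abs_add_le β (α - β)
    calc ‖q α (α - β) * kernelOp (truncKernel r p) φ α‖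
        ≤ Q (α - β) * ((1 + |α|) * K) := by
          rw [norm_mul]
          exact mul_le_mul (hk.abs_le _ _)
            (hp.abs_kernelOp_truncKernel_le hε hQ hφC hφL hr α) (norm_nonneg _) hQα
      _ ≤ Q (α - β) * ((1 + (|β| + |α - β|)) * K) := by gcongr
      _ = K * ((1 + |β|) * Q (α - β) + |α - β| * Q (α - β)) := by ring
  refine tendsto_integral_filter_of_dominated_convergence _ ?_ ?_
    ((((hQ.integrable.const_mul (1 + |β|)).add hQ.integrable_abs_mul).comp_sub_right β).const_mul K)
    (Eventually.of_forall fun α =>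
      (hp.tendsto_kernelOp_truncKernel hε hQ hφC hφL α).const_mul _)
  · filter_upwards [self_mem_nhdsWithin] with r hr
    exact ((hk.measurable_comp measurable_id (by fun_prop)).mul
      (measurable_kernelOp (hp.isDominated_truncKernel hr)
        hφL.continuous.measurable)).aestronglyMeasurable
  · filter_upwards [self_mem_nhdsWithin] with r hr
    exact Eventually.of_forall fun α => hbound α hr

lemma IsMajorant.measurable_shiftedMoment (hQ : IsMajorant Q) : Measurable (shiftedMoment Q) := by
  have hQm := hQ.measurable
  exact Measurable.lintegral_prod_right' (f := fun x : ℝ × ℝ => .ofReal ((|x.1| + |x.2|) * Q x.2))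
    (by fun_prop)

lemma lintegral_truncKernel_commutator_le (hε : 0 < ε) (hr : 0 < r) (hQ : IsMajorant Q)
    (hp : IsHilbertWeight ε Q p) (hq : IsPoissonWeight ε Q q) (hφ : Integrable φ) :
    ∫⁻ β, ‖kernelOp (truncKernel r p) (kernelOp q φ) β -
        kernelOp q (kernelOp (truncKernel r p) φ) β‖ₑ ≤
      5 * (∫⁻ t, ENNReal.ofReal (Q t)) * ∫⁻ γ, shiftedMoment Q γ * ‖φ γ‖ₑ := by
  have hQr : IsMajorant fun t => r⁻¹ * ε * Q t := hQ.const_mul (by positivity)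
  have hm : AEMeasurable fun γ => shiftedMoment Q γ * ‖φ γ‖ₑ :=
    hQ.measurable_shiftedMoment.aemeasurable.mul hφ.1.enorm
  refine (lintegral_kernelOp_commutator_le (hp.isDominated_truncKernel hr)
    hq.toIsDominated hQr hQ hφ).trans ?_
  rw [← lintegral_const_mul'' _ hm]
  refine lintegral_mono fun γ => ?_
  rw [← mul_assoc]
  gcongr
  calc _ ≤ 4 * (∫⁻ t, ENNReal.ofReal (Q t)) * shiftedMoment Q γ +
        (∫⁻ t, ENNReal.ofReal (Q t)) * shiftedMoment Q γ :=
      add_le_add (lintegral_enorm_frozenDefect_truncKernel_left_le hε.le hr hQ hp hq γ)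
        (lintegral_enorm_frozenDefect_truncKernel_right_le hε hQ hp hq γ)
    _ = 5 * (∫⁻ t, ENNReal.ofReal (Q t)) * shiftedMoment Q γ := by ring

theorem lintegral_pvKernelOp_commutator_le (hε : 0 < ε) (hQ : IsMajorant Q)
    (hp : IsHilbertWeight ε Q p) (hq : IsPoissonWeight ε Q q) (hφ : Integrable φ)
    (hφC : ∀ x, |φ x| ≤ C) (hφL : LipschitzWith L φ) :
    ∫⁻ β, ‖pvKernelOp p (kernelOp q φ) β - kernelOp q (pvKernelOp p φ) β‖ₑ ≤
      5 * (∫⁻ t, ENNReal.ofReal (Q t)) * ∫⁻ γ, shiftedMoment Q γ * ‖φ γ‖ₑ := by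
  obtain ⟨K, hK⟩ := hq.exists_lipschitzWith_kernelOp hε hQ hφ
  have hqφ := abs_kernelOp_le hq.toIsDominated hQ hφC
  have hφm : Measurable φ := hφL.continuous.measurable
  obtain ⟨r, -, hr, hr0⟩ := exists_seq_strictAnti_tendsto (0 : ℝ)
  have hlim (β : ℝ) := ((hp.tendsto_kernelOp_truncKernel hε.le hQ hqφ hK β).sub
    (tendsto_kernelOp_kernelOp_truncKernel hε.le hQ hp hq.toIsDominated hφC hφL β)).comp
    (tendsto_nhdsWithin_iff.2 ⟨hr0, Eventually.of_forall hr⟩)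
  refine (lintegral_enorm_le_liminf_of_tendsto (Eventually.of_forall hlim) fun n => ?_).trans
    (liminf_le_of_frequently_le' (Frequently.of_forall fun n =>
      lintegral_truncKernel_commutator_le hε (hr n) hQ hp hq hφ))
  have hD := hp.isDominated_truncKernel (hr n)
  exact ((measurable_kernelOp hD (measurable_kernelOp hq.toIsDominated hφm)).sub
    (measurable_kernelOp hq.toIsDominated (measurable_kernelOp hD hφm))).enorm.aemeasurable

end PrincipalValueOperator

section TruncatedPoisson

variable {ε R : ℝ}

/-- The Poisson kernel at height `ε`, without its normalization `1/π`, truncated to `[-R, R]`. -/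
def truncPoisson (ε R : ℝ) : ℝ → ℝ := (Icc (-R) R).indicator fun s => ε / (ε ^ 2 + s ^ 2)

lemma truncPoisson_of_abs_le {s : ℝ} (h : |s| ≤ R) : truncPoisson ε R s = ε / (ε ^ 2 + s ^ 2) :=
  indicator_of_mem (s := Icc (-R) R) (abs_le.1 h) _

lemma abs_le_mul_truncPoisson (hR : 0 ≤ R) (hεR : ε ≤ R ^ 2) {c t y : ℝ}
    (hy₀ : ε < t ^ 2 → y = 0) (hy : |y| ≤ c * (ε / (ε ^ 2 + t ^ 2))) :
    |y| ≤ c * truncPoisson ε R t := by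
  by_cases ht : |t| ≤ R
  · rwa [truncPoisson_of_abs_le ht]
  · have ht' : R ^ 2 < t ^ 2 := sq_lt_sq.2 (by rwa [abs_of_nonneg hR, ← not_le])
    rw [hy₀ (hεR.trans_lt ht'), truncPoisson,
      indicator_of_notMem (by rwa [mem_Icc, ← abs_le]), abs_zero, mul_zero]

lemma truncPoisson_nonneg (hε : 0 ≤ ε) (R s : ℝ) : 0 ≤ truncPoisson ε R s :=
  indicator_nonneg (fun _ _ => by positivity) s

lemma isMajorant_truncPoisson (hε : 0 < ε) (R : ℝ) : IsMajorant (truncPoisson ε R) where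
  measurable := Measurable.indicator (by fun_prop) measurableSet_Icc
  nonneg := truncPoisson_nonneg hε.le R
  exists_le := by
    refine ⟨ε / ε ^ 2, fun t => indicator_apply_le' (fun _ => ?_) (fun _ => by positivity)⟩
    gcongr
    exact le_add_of_nonneg_right (sq_nonneg t)
  integrable := by
    refine (ContinuousOn.integrableOn_Icc ?_).integrable_indicator measurableSet_Icc
    fun_prop (disch := intros; positivity)
  integrable_abs_mul := by
    simp only [truncPoisson, ← indicator_mul_right]
    refine (ContinuousOn.integrableOn_Icc ?_).integrable_indicator measurableSet_Icc
    fun_prop (disch := intros; positivity)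

lemma lintegral_truncPoisson_le (hε : 0 < ε) (hR : 0 ≤ R) :
    ∫⁻ s, ENNReal.ofReal (truncPoisson ε R s) ≤ ENNReal.ofReal π := by
  rw [← ofReal_integral_eq_lintegral_ofReal (isMajorant_truncPoisson hε R).integrable
    (Eventually.of_forall (truncPoisson_nonneg hε.le R)), truncPoisson,
    integral_indicator measurableSet_Icc, integral_Icc_eq_integral_Ioc,
    ← intervalIntegral.integral_of_le (by linarith), integral_div_sq_add_sq]
  refine ENNReal.ofReal_le_ofReal ?_
  linarith [arctan_lt_pi_div_two (R / ε), neg_pi_div_two_lt_arctan (-R / ε)]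

lemma integral_abs_mul_truncPoisson (hε : 0 < ε) (hR : 0 ≤ R) :
    ∫ s, |s| * truncPoisson ε R s = ε * log ((ε ^ 2 + R ^ 2) / ε ^ 2) := by
  have hpos (s : ℝ) : ε ^ 2 + s ^ 2 ≠ 0 := by positivity
  have hderiv (s : ℝ) :
      HasDerivAt (fun s => ε / 2 * log (ε ^ 2 + s ^ 2)) (s * (ε / (ε ^ 2 + s ^ 2))) s := by
    refine ((((hasDerivAt_pow 2 s).const_add (ε ^ 2)).log (hpos s)).const_mul
      (ε / 2)).congr_deriv ?_
    field_simp
    norm_num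
  calc ∫ s, |s| * truncPoisson ε R s
      = ∫ s, (Iic R).indicator (fun s => s * (ε / (ε ^ 2 + s ^ 2))) |s| := by
        congr 1 with s
        by_cases h : |s| ≤ R <;> simp [truncPoisson, indicator, ← abs_le, h]
    _ = 2 * ∫ s in (0)..R, s * (ε / (ε ^ 2 + s ^ 2)) := by
        rw [integral_comp_abs, setIntegral_indicator measurableSet_Iic, Ioi_inter_Iic,
          intervalIntegral.integral_of_le hR]
    _ = ε * log ((ε ^ 2 + R ^ 2) / ε ^ 2) := by
        rw [intervalIntegral.integral_eq_sub_of_hasDerivAt (fun s _ => hderiv s)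
          (Continuous.intervalIntegrable (by fun_prop (disch := exact hpos _)) _ _),
          log_div (hpos R) (by positivity)]
        ring_nf

lemma lintegral_abs_mul_truncPoisson_le (hε : 0 < ε) (hR : 0 ≤ R) (h : ε ^ 2 + R ^ 2 ≤ 1) :
    ∫⁻ s, ENNReal.ofReal (|s| * truncPoisson ε R s) ≤ ENNReal.ofReal (2 * ε * log (1 / ε)) := by
  rw [← ofReal_integral_eq_lintegral_ofReal (isMajorant_truncPoisson hε R).integrable_abs_mul
    (Eventually.of_forall fun s => mul_nonneg (abs_nonneg s) (truncPoisson_nonneg hε.le R s)),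
    integral_abs_mul_truncPoisson hε hR]
  refine ENNReal.ofReal_le_ofReal ?_
  calc ε * log ((ε ^ 2 + R ^ 2) / ε ^ 2) ≤ ε * log (1 / ε ^ 2) := by gcongr
    _ = 2 * ε * log (1 / ε) := by
      rw [one_div, one_div, log_inv, log_inv, log_pow]
      push_cast
      ring

lemma shiftedMoment_const_mul (P : ℝ → ℝ) {c : ℝ} (hc : 0 ≤ c) (γ : ℝ) :
    shiftedMoment (fun t => c * P t) γ = ENNReal.ofReal c * shiftedMoment P γ := by
  simp only [shiftedMoment, mul_left_comm _ c, ENNReal.ofReal_mul hc]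
  exact lintegral_const_mul' _ _ ENNReal.ofReal_ne_top

lemma lintegral_shiftedMoment_mul {P : ℝ → ℝ} (hP : IsMajorant P) :
    ∫⁻ γ, shiftedMoment P γ * ENNReal.ofReal (P γ) =
      2 * (∫⁻ s, ENNReal.ofReal (P s)) * ∫⁻ s, ENNReal.ofReal (|s| * P s) := by
  have hPm := hP.measurable
  have hsplit (γ : ℝ) : shiftedMoment P γ * ENNReal.ofReal (P γ) =
      ENNReal.ofReal (|γ| * P γ) * (∫⁻ s, ENNReal.ofReal (P s)) +
        (∫⁻ s, ENNReal.ofReal (|s| * P s)) * ENNReal.ofReal (P γ) := by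
    have (s : ℝ) : ENNReal.ofReal ((|γ| + |s|) * P s) =
        ENNReal.ofReal |γ| * ENNReal.ofReal (P s) + ENNReal.ofReal (|s| * P s) := by
      have hPs := hP.nonneg s
      rw [add_mul, ENNReal.ofReal_add (by positivity) (by positivity),
        ENNReal.ofReal_mul (abs_nonneg γ)]
    simp only [shiftedMoment, this]
    rw [lintegral_add_left (by fun_prop), lintegral_const_mul _ (by fun_prop),
      ENNReal.ofReal_mul (abs_nonneg γ)]
    ring
  simp only [hsplit]
  rw [lintegral_add_left (by fun_prop), lintegral_mul_const _ (by fun_prop),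
    lintegral_const_mul _ (by fun_prop)]
  ring

lemma lintegral_shiftedMoment_truncPoisson_mul_le (hε : 0 < ε) (hR : 0 ≤ R)
    (h : ε ^ 2 + R ^ 2 ≤ 1) :
    ∫⁻ γ, shiftedMoment (truncPoisson ε R) γ * ENNReal.ofReal (truncPoisson ε R γ) ≤
      2 * ENNReal.ofReal π * ENNReal.ofReal (2 * ε * log (1 / ε)) := by
  rw [lintegral_shiftedMoment_mul (isMajorant_truncPoisson hε R)]
  gcongr
  exacts [lintegral_truncPoisson_le hε hR, lintegral_abs_mul_truncPoisson_le hε hR h]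

end TruncatedPoisson

section ConcreteWeights

variable {ε B R : ℝ} {χ X : ℝ → ℝ}

/-- A cutoff to the scale `√ε`, as are the cutoffs `ψ_{√ε/2⁶}` in the kernels of `H` and `M`. -/
structure IsLocalCutoff (ε B : ℝ) (χ : ℝ → ℝ) : Prop where
  contDiff : ContDiff ℝ 1 χ
  even : ∀ x, χ (-x) = χ x
  abs_le_one : ∀ x, |χ x| ≤ 1
  eq_zero : ∀ x, ε < x ^ 2 → χ x = 0
  abs_deriv_le : ∀ x, |deriv χ x| ≤ B * |x| / ε

/-- A width function comparable to `ε` and critical at `0`, as is the coefficient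
`2ε + f(α) + g(α)` of the kernels of `H` and `M` for `|α| ≲ √ε`. -/
structure IsWidth (ε B : ℝ) (X : ℝ → ℝ) : Prop where
  contDiff : ContDiff ℝ 1 X
  le_apply : ∀ x, ε ≤ X x
  apply_le : ∀ x, X x ≤ B * ε
  abs_deriv_le : ∀ x, |deriv X x| ≤ B * |x|

/-- The kernel of `H`, multiplied by the convolution variable `t = α - β`. -/
def hilbertWeight (χ X : ℝ → ℝ) (α t : ℝ) : ℝ := X α ^ 2 / (t ^ 2 + X α ^ 2) * χ α * χ t

/-- The kernel of `M` as a function of `α` and the convolution variable `t = α - β`. -/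
def poissonWeight (χ X : ℝ → ℝ) (α t : ℝ) : ℝ := X α / (t ^ 2 + X α ^ 2) * χ α * χ t

namespace IsLocalCutoff

lemma hasDerivAt (hχ : IsLocalCutoff ε B χ) (x : ℝ) : HasDerivAt χ (deriv χ x) x :=
  (hχ.contDiff.differentiable one_ne_zero x).hasDerivAt

lemma deriv_eq_zero (hχ : IsLocalCutoff ε B χ) {x : ℝ} (hx : ε < x ^ 2) : deriv χ x = 0 := by
  have : χ =ᶠ[𝓝 x] fun _ => 0 := by
    filter_upwards [(continuous_pow 2).continuousAt.eventually (lt_mem_nhds hx)] with y hy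
    exact hχ.eq_zero y hy
  rw [this.deriv_eq, deriv_const]

lemma add_abs_mul_abs_deriv_le (hχ : IsLocalCutoff ε B χ) (hε : 0 < ε) (hε₁ : ε ≤ 1) (hB : 0 ≤ B)
    (t : ℝ) : (ε + |t|) * |deriv χ t| ≤ 2 * B := by
  rcases lt_or_ge ε (t ^ 2) with ht | ht
  · rw [hχ.deriv_eq_zero ht, abs_zero, mul_zero]
    positivity
  have ht₁ : |t| ≤ 1 := abs_le_one_iff_mul_self_le_one.2 (by nlinarith)
  calc (ε + |t|) * |deriv χ t| ≤ (ε + |t|) * (B * |t| / ε) := by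
        gcongr
        exact hχ.abs_deriv_le t
    _ = B * ((ε * |t| + t ^ 2) / ε) := by
        rw [← sq_abs t]
        ring
    _ ≤ B * ((ε * 1 + ε) / ε) := by gcongr
    _ = 2 * B := by
        field_simp
        ring

end IsLocalCutoff

namespace IsWidth

lemma mono {C : ℝ} (hX : IsWidth ε B X) (hε : 0 ≤ ε) (hBC : B ≤ C) : IsWidth ε C X where
  contDiff := hX.contDiff
  le_apply := hX.le_apply
  apply_le x := (hX.apply_le x).trans (by gcongr)
  abs_deriv_le x := (hX.abs_deriv_le x).trans (by gcongr)

lemma pos (hX : IsWidth ε B X) (hε : 0 < ε) (x : ℝ) : 0 < X x := hε.trans_le (hX.le_apply x)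

lemma one_le (hX : IsWidth ε B X) (hε : 0 < ε) : 1 ≤ B :=
  le_of_mul_le_mul_right ((one_mul ε).trans_le ((hX.le_apply 0).trans (hX.apply_le 0))) hε

lemma hasDerivAt (hX : IsWidth ε B X) (x : ℝ) : HasDerivAt X (deriv X x) x :=
  (hX.contDiff.differentiable one_ne_zero x).hasDerivAt

lemma inv_le (hX : IsWidth ε B X) (hε : 0 < ε) (α t : ℝ) :
    (t ^ 2 + X α ^ 2)⁻¹ ≤ ε / (ε ^ 2 + t ^ 2) / ε := by
  rw [div_div_cancel_left' hε.ne', add_comm]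
  have := hX.le_apply α
  gcongr

lemma div_le (hX : IsWidth ε B X) (hε : 0 < ε) (α t : ℝ) :
    X α / (t ^ 2 + X α ^ 2) ≤ B * (ε / (ε ^ 2 + t ^ 2)) := by
  have hB := hX.one_le hε
  calc X α / (t ^ 2 + X α ^ 2) ≤ B * ε * (ε / (ε ^ 2 + t ^ 2) / ε) := by
        rw [div_eq_mul_inv]
        gcongr
        exacts [hX.apply_le α, hX.inv_le hε α t]
    _ = B * (ε / (ε ^ 2 + t ^ 2)) := by field_simp

lemma sq_div_le (hX : IsWidth ε B X) (hε : 0 < ε) (α t : ℝ) :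
    X α ^ 2 / (t ^ 2 + X α ^ 2) ≤ B ^ 2 * ε * (ε / (ε ^ 2 + t ^ 2)) := by
  have hXα := hX.pos hε α
  calc X α ^ 2 / (t ^ 2 + X α ^ 2) = X α * (X α / (t ^ 2 + X α ^ 2)) := by ring
    _ ≤ B * ε * (B * (ε / (ε ^ 2 + t ^ 2))) := by
        gcongr
        exacts [hXα.le.trans (hX.apply_le α), hX.apply_le α, hX.div_le hε α t]
    _ = B ^ 2 * ε * (ε / (ε ^ 2 + t ^ 2)) := by ring

lemma hasDerivAt_sq_div (hX : IsWidth ε B X) (hε : 0 < ε) (α t : ℝ) :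
    HasDerivAt (fun α => X α ^ 2 / (t ^ 2 + X α ^ 2))
      (2 * t ^ 2 / (t ^ 2 + X α ^ 2) * (X α / (t ^ 2 + X α ^ 2)) * deriv X α) α := by
  have hXα := hX.pos hε α
  have hsq := (hX.hasDerivAt α).fun_pow 2
  refine (hsq.fun_div (hsq.const_add (t ^ 2)) (by positivity)).congr_deriv ?_
  field_simp
  ring

lemma hasDerivAt_div (hX : IsWidth ε B X) (hε : 0 < ε) (α t : ℝ) :
    HasDerivAt (fun α => X α / (t ^ 2 + X α ^ 2))
      ((t ^ 2 - X α ^ 2) / (t ^ 2 + X α ^ 2) * (t ^ 2 + X α ^ 2)⁻¹ * deriv X α) α := by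
  have hXα := hX.pos hε α
  refine ((hX.hasDerivAt α).fun_div (((hX.hasDerivAt α).fun_pow 2).const_add (t ^ 2))
    (by positivity)).congr_deriv ?_
  field_simp
  ring

lemma abs_deriv_sq_div_le (hX : IsWidth ε B X) (hε : 0 < ε) (α t : ℝ) :
    |2 * t ^ 2 / (t ^ 2 + X α ^ 2) * (X α / (t ^ 2 + X α ^ 2)) * deriv X α| ≤
      2 * B ^ 2 * |α| * (ε / (ε ^ 2 + t ^ 2)) := by
  have hXα := hX.pos hε α
  have hB := hX.one_le hε
  have ht : 2 * t ^ 2 / (t ^ 2 + X α ^ 2) ≤ 2 := by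
    rw [div_le_iff₀ (by positivity)]
    nlinarith
  rw [abs_mul, abs_of_nonneg (by positivity)]
  calc _ ≤ 2 * (B * (ε / (ε ^ 2 + t ^ 2))) * (B * |α|) := by
        gcongr
        exacts [hX.div_le hε α t, hX.abs_deriv_le α]
    _ = 2 * B ^ 2 * |α| * (ε / (ε ^ 2 + t ^ 2)) := by ring

lemma abs_deriv_div_le (hX : IsWidth ε B X) (hε : 0 < ε) (α t : ℝ) :
    |(t ^ 2 - X α ^ 2) / (t ^ 2 + X α ^ 2) * (t ^ 2 + X α ^ 2)⁻¹ * deriv X α| ≤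
      B * |α| / ε * (ε / (ε ^ 2 + t ^ 2)) := by
  have hXα := hX.pos hε α
  have ht : |(t ^ 2 - X α ^ 2) / (t ^ 2 + X α ^ 2)| ≤ 1 := by
    rw [abs_div, abs_of_pos (by positivity : 0 < t ^ 2 + X α ^ 2), div_le_one (by positivity),
      abs_le]
    constructor <;> nlinarith
  rw [abs_mul, abs_mul, abs_of_pos (by positivity : 0 < (t ^ 2 + X α ^ 2)⁻¹)]
  calc _ ≤ 1 * (ε / (ε ^ 2 + t ^ 2) / ε) * (B * |α|) := by
        gcongr
        exacts [hX.inv_le hε α t, hX.abs_deriv_le α]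
    _ = B * |α| / ε * (ε / (ε ^ 2 + t ^ 2)) := by ring

lemma add_abs_mul_le (hX : IsWidth ε B X) (hε : 0 < ε) (α t : ℝ) :
    (ε + |t|) * |(-(2 * t)) / (t ^ 2 + X α ^ 2)| ≤ 3 := by
  have hXα := hX.pos hε α
  rw [abs_div, abs_neg, abs_mul, abs_two, abs_of_pos (by positivity : 0 < t ^ 2 + X α ^ 2),
    ← mul_div_assoc, div_le_iff₀ (by positivity), ← sq_abs t]
  nlinarith [sq_nonneg (X α - |t|), mul_le_mul_of_nonneg_right (hX.le_apply α) (abs_nonneg t)]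

end IsWidth

lemma hasDerivAt_hilbertWeight (hε : 0 < ε) (hχ : IsLocalCutoff ε B χ) (hX : IsWidth ε B X)
    (α t : ℝ) :
    HasDerivAt (fun α => hilbertWeight χ X α t)
      ((2 * t ^ 2 / (t ^ 2 + X α ^ 2) * (X α / (t ^ 2 + X α ^ 2)) * deriv X α * χ α +
        X α ^ 2 / (t ^ 2 + X α ^ 2) * deriv χ α) * χ t) α :=
  ((hX.hasDerivAt_sq_div hε α t).fun_mul (hχ.hasDerivAt α)).mul_const (χ t)

lemma hasDerivAt_poissonWeight_left (hε : 0 < ε) (hχ : IsLocalCutoff ε B χ)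
    (hX : IsWidth ε B X) (α t : ℝ) :
    HasDerivAt (fun α => poissonWeight χ X α t)
      (((t ^ 2 - X α ^ 2) / (t ^ 2 + X α ^ 2) * (t ^ 2 + X α ^ 2)⁻¹ * deriv X α * χ α +
        X α / (t ^ 2 + X α ^ 2) * deriv χ α) * χ t) α :=
  ((hX.hasDerivAt_div hε α t).fun_mul (hχ.hasDerivAt α)).mul_const (χ t)

lemma hasDerivAt_poissonWeight_right (hε : 0 < ε) (hχ : IsLocalCutoff ε B χ)
    (hX : IsWidth ε B X) (α t : ℝ) :
    HasDerivAt (poissonWeight χ X α)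
      (X α / (t ^ 2 + X α ^ 2) * χ α * (-(2 * t) / (t ^ 2 + X α ^ 2) * χ t + deriv χ t)) t := by
  have hXα := hX.pos hε α
  have hdiv := (hasDerivAt_const t (X α)).fun_div ((hasDerivAt_pow 2 t).add_const (X α ^ 2))
    (by positivity)
  refine ((hdiv.mul_const (χ α)).fun_mul (hχ.hasDerivAt t)).congr_deriv ?_
  field_simp
  norm_num
  ring

lemma abs_mul_add_mul_mul_le {x y z w a b : ℝ} (hx : |x| ≤ a) (hy : |y| ≤ 1) (hz : |z| ≤ b)
    (hw : |w| ≤ 1) : |(x * y + z) * w| ≤ a + b := by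
  rw [abs_mul]
  refine (mul_le_of_le_one_right (abs_nonneg _) hw).trans ((abs_add_le _ _).trans ?_)
  rw [abs_mul]
  exact add_le_add ((mul_le_of_le_one_right (abs_nonneg _) hy).trans hx) hz

lemma abs_hilbertWeight_le (hε : 0 < ε) (hχ : IsLocalCutoff ε B χ) (hX : IsWidth ε B X)
    (α t : ℝ) : |hilbertWeight χ X α t| ≤ B ^ 2 * ε * (ε / (ε ^ 2 + t ^ 2)) := by
  rw [hilbertWeight, abs_mul, abs_mul, abs_of_nonneg (by positivity)]
  exact (mul_le_of_le_one_right (by positivity) (hχ.abs_le_one t)).trans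
    ((mul_le_of_le_one_right (by positivity) (hχ.abs_le_one α)).trans (hX.sq_div_le hε α t))

lemma abs_deriv_hilbertWeight_le (hε : 0 < ε) (hχ : IsLocalCutoff ε B χ) (hX : IsWidth ε B X)
    (α t : ℝ) :
    |deriv (fun α => hilbertWeight χ X α t) α| ≤ 3 * B ^ 3 * |α| * (ε / (ε ^ 2 + t ^ 2)) := by
  have hB := hX.one_le hε
  have hcut : |X α ^ 2 / (t ^ 2 + X α ^ 2) * deriv χ α| ≤
      B ^ 2 * ε * (ε / (ε ^ 2 + t ^ 2)) * (B * |α| / ε) := by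
    rw [abs_mul, abs_of_nonneg (by positivity)]
    gcongr
    exacts [hX.sq_div_le hε α t, hχ.abs_deriv_le α]
  rw [(hasDerivAt_hilbertWeight hε hχ hX α t).deriv]
  calc _ ≤ 2 * B ^ 2 * |α| * (ε / (ε ^ 2 + t ^ 2)) +
        B ^ 2 * ε * (ε / (ε ^ 2 + t ^ 2)) * (B * |α| / ε) :=
      abs_mul_add_mul_mul_le (hX.abs_deriv_sq_div_le hε α t) (hχ.abs_le_one α) hcut
        (hχ.abs_le_one t)
    _ = (2 * B ^ 2 + B ^ 3) * |α| * (ε / (ε ^ 2 + t ^ 2)) := by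
      field_simp
    _ ≤ 3 * B ^ 3 * |α| * (ε / (ε ^ 2 + t ^ 2)) := by
      gcongr
      nlinarith [sq_nonneg B]

lemma isHilbertWeight_hilbertWeight (hε : 0 < ε) (hR : 0 ≤ R) (hεR : ε ≤ R ^ 2)
    (hχ : IsLocalCutoff ε B χ) (hX : IsWidth ε B X) :
    IsHilbertWeight ε (fun t => 5 * B ^ 3 * truncPoisson ε R t) (hilbertWeight χ X) where
  measurable := by
    have hXm := hX.contDiff.continuous.measurable
    have hχm := hχ.contDiff.continuous.measurable
    unfold Function.uncurry hilbertWeight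
    fun_prop
  even α t := by simp only [hilbertWeight, neg_sq, hχ.even]
  abs_le α t := by
    have hB := hX.one_le hε
    refine (abs_le_mul_truncPoisson (c := ε * (5 * B ^ 3)) hR hεR (fun ht => ?_)
      ((abs_hilbertWeight_le hε hχ hX α t).trans ?_)).trans_eq (mul_assoc _ _ _)
    · rw [hilbertWeight, hχ.eq_zero t ht, mul_zero]
    · rw [mul_comm (B ^ 2)]
      gcongr
      nlinarith [sq_nonneg B]
  contDiff t := by
    have hXc := hX.contDiff
    have hχc := hχ.contDiff
    have hX₀ (α : ℝ) : t ^ 2 + X α ^ 2 ≠ 0 := by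
      have := hX.pos hε α
      positivity
    unfold hilbertWeight
    fun_prop (disch := exact hX₀)
  abs_deriv_le α t := by
    have hB := hX.one_le hε
    refine (abs_le_mul_truncPoisson (c := 5 * B ^ 3 * |α|) hR hεR (fun ht => ?_)
      ((abs_deriv_hilbertWeight_le hε hχ hX α t).trans ?_)).trans_eq (by ring)
    · simp [hilbertWeight, hχ.eq_zero t ht]
    · gcongr
      norm_num

lemma abs_poissonWeight_le (hε : 0 < ε) (hχ : IsLocalCutoff ε B χ) (hX : IsWidth ε B X)
    (α t : ℝ) : |poissonWeight χ X α t| ≤ B * (ε / (ε ^ 2 + t ^ 2)) := by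
  have hXα := hX.pos hε α
  rw [poissonWeight, abs_mul, abs_mul, abs_of_nonneg (by positivity)]
  exact (mul_le_of_le_one_right (by positivity) (hχ.abs_le_one t)).trans
    ((mul_le_of_le_one_right (by positivity) (hχ.abs_le_one α)).trans (hX.div_le hε α t))

lemma abs_deriv_poissonWeight_left_le (hε : 0 < ε) (hχ : IsLocalCutoff ε B χ)
    (hX : IsWidth ε B X) (α t : ℝ) :
    |deriv (fun α => poissonWeight χ X α t) α| ≤
      2 * B ^ 2 * |α| / ε * (ε / (ε ^ 2 + t ^ 2)) := by
  have hB := hX.one_le hε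
  have hcut : |X α / (t ^ 2 + X α ^ 2) * deriv χ α| ≤
      B * (ε / (ε ^ 2 + t ^ 2)) * (B * |α| / ε) := by
    have hXα := hX.pos hε α
    rw [abs_mul, abs_of_nonneg (by positivity)]
    gcongr
    exacts [hX.div_le hε α t, hχ.abs_deriv_le α]
  rw [(hasDerivAt_poissonWeight_left hε hχ hX α t).deriv]
  calc _ ≤ B * |α| / ε * (ε / (ε ^ 2 + t ^ 2)) +
        B * (ε / (ε ^ 2 + t ^ 2)) * (B * |α| / ε) :=
      abs_mul_add_mul_mul_le (hX.abs_deriv_div_le hε α t) (hχ.abs_le_one α) hcut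
        (hχ.abs_le_one t)
    _ = (B + B ^ 2) * |α| / ε * (ε / (ε ^ 2 + t ^ 2)) := by ring
    _ ≤ 2 * B ^ 2 * |α| / ε * (ε / (ε ^ 2 + t ^ 2)) := by
      gcongr
      nlinarith

lemma add_abs_mul_abs_deriv_poissonWeight_right_le (hε : 0 < ε) (hε₁ : ε ≤ 1)
    (hχ : IsLocalCutoff ε B χ) (hX : IsWidth ε B X) (α t : ℝ) :
    (ε + |t|) * |deriv (poissonWeight χ X α) t| ≤ 5 * B ^ 2 * (ε / (ε ^ 2 + t ^ 2)) := by
  have hB := hX.one_le hε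
  have hXα := hX.pos hε α
  have hcut : |X α / (t ^ 2 + X α ^ 2) * χ α| ≤ B * (ε / (ε ^ 2 + t ^ 2)) := by
    rw [abs_mul, abs_of_nonneg (by positivity)]
    exact (mul_le_of_le_one_right (by positivity) (hχ.abs_le_one α)).trans (hX.div_le hε α t)
  have hlog : (ε + |t|) * |-(2 * t) / (t ^ 2 + X α ^ 2) * χ t + deriv χ t| ≤ 3 + 2 * B := by
    calc _ ≤ (ε + |t|) * (|-(2 * t) / (t ^ 2 + X α ^ 2)| * 1 + |deriv χ t|) := by
          gcongr
          refine (abs_add_le _ _).trans ?_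
          rw [abs_mul]
          gcongr
          exact hχ.abs_le_one t
      _ = (ε + |t|) * |-(2 * t) / (t ^ 2 + X α ^ 2)| + (ε + |t|) * |deriv χ t| := by ring
      _ ≤ 3 + 2 * B := add_le_add (hX.add_abs_mul_le hε α t)
          (hχ.add_abs_mul_abs_deriv_le hε hε₁ (by positivity) t)
  rw [(hasDerivAt_poissonWeight_right hε hχ hX α t).deriv, abs_mul, mul_left_comm]
  calc _ ≤ B * (ε / (ε ^ 2 + t ^ 2)) * (3 + 2 * B) := by gcongr
    _ = (3 * B + 2 * B ^ 2) * (ε / (ε ^ 2 + t ^ 2)) := by ring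
    _ ≤ 5 * B ^ 2 * (ε / (ε ^ 2 + t ^ 2)) := by
      gcongr
      nlinarith

lemma isPoissonWeight_poissonWeight (hε : 0 < ε) (hε₁ : ε ≤ 1) (hR : 0 ≤ R) (hεR : ε ≤ R ^ 2)
    (hχ : IsLocalCutoff ε B χ) (hX : IsWidth ε B X) :
    IsPoissonWeight ε (fun t => 5 * B ^ 3 * truncPoisson ε R t) (poissonWeight χ X) where
  measurable := by
    have hXm := hX.contDiff.continuous.measurable
    have hχm := hχ.contDiff.continuous.measurable
    unfold Function.uncurry poissonWeight
    fun_prop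
  abs_le α t := by
    have hB := hX.one_le hε
    refine abs_le_mul_truncPoisson hR hεR (fun ht => ?_)
      ((abs_poissonWeight_le hε hχ hX α t).trans ?_)
    · rw [poissonWeight, hχ.eq_zero t ht, mul_zero]
    · gcongr
      nlinarith [sq_nonneg B]
  differentiable_left t α := (hasDerivAt_poissonWeight_left hε hχ hX α t).differentiableAt
  abs_deriv_left_le α t := by
    have hB := hX.one_le hε
    refine (abs_le_mul_truncPoisson (c := 5 * B ^ 3 * |α| / ε) hR hεR (fun ht => ?_)
      ((abs_deriv_poissonWeight_left_le hε hχ hX α t).trans ?_)).trans_eq (by ring)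
    · simp [poissonWeight, hχ.eq_zero t ht]
    · gcongr <;> norm_num
  contDiff_right α := by
    have hχc := hχ.contDiff
    have hX₀ (t : ℝ) : t ^ 2 + X α ^ 2 ≠ 0 := by
      have := hX.pos hε α
      positivity
    unfold poissonWeight
    fun_prop (disch := exact hX₀)
  abs_deriv_right_le α t := by
    have hB := hX.one_le hε
    rw [← abs_of_pos (by positivity : 0 < ε + |t|), ← abs_mul]
    refine abs_le_mul_truncPoisson hR hεR (fun ht => ?_) ?_
    · rw [(hasDerivAt_poissonWeight_right hε hχ hX α t).deriv, hχ.eq_zero t ht,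
        hχ.deriv_eq_zero ht]
      ring
    · rw [abs_mul, abs_of_pos (by positivity : 0 < ε + |t|)]
      exact (add_abs_mul_abs_deriv_poissonWeight_right_le hε hε₁ hχ hX α t).trans
        (by gcongr; norm_num)

end ConcreteWeights

section Cutoff

variable {ε B ρ : ℝ} {ψ : ℝ → ℝ}

namespace IsCutoff

lemma exists_abs_deriv_le (hψ : IsCutoff ψ) : ∃ B, 0 ≤ B ∧ ∀ x, |deriv ψ x| ≤ B * |x| := by
  obtain ⟨hsmooth, -, -, hψ₀, hψ₁⟩ := hψ
  have hsupp : HasCompactSupport ψ := .intro (isCompact_Icc (a := -1) (b := 1)) fun x hx =>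
    hψ₀ x (not_le.1 fun h => hx (abs_le.1 h))
  obtain ⟨B, hB⟩ := hsupp.deriv.exists_bound_of_continuous (hsmooth.continuous_deriv (by simp))
  have hB₀ : 0 ≤ B := (norm_nonneg _).trans (hB 0)
  refine ⟨2 * B, by positivity, fun x => ?_⟩
  rcases lt_or_ge |x| (1 / 2) with hx | hx
  · have : ψ =ᶠ[𝓝 x] fun _ => 1 := by
      filter_upwards [continuous_abs.continuousAt.eventually (gt_mem_nhds hx)] with y hy
      exact hψ₁ y hy.le
    rw [this.deriv_eq, deriv_const, abs_zero]
    positivity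
  · calc |deriv ψ x| ≤ B * 1 := (hB x).trans_eq (mul_one B).symm
      _ ≤ B * (2 * |x|) := by
        gcongr
        linarith
      _ = 2 * B * |x| := by ring

lemma contDiff_scut (hψ : IsCutoff ψ) (ρ : ℝ) : ContDiff ℝ 1 (scut ψ ρ) :=
  (hψ.1.of_le (by simp)).comp (contDiff_id.div_const ρ)

lemma abs_scut_le_one (hψ : IsCutoff ψ) (ρ x : ℝ) : |scut ψ ρ x| ≤ 1 :=
  abs_le.2 ⟨by linarith [(hψ.2.2.1 (x / ρ)).1, show scut ψ ρ x = ψ (x / ρ) from rfl],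
    (hψ.2.2.1 (x / ρ)).2⟩

lemma scut_eq_zero (hψ : IsCutoff ψ) (hρ : 0 < ρ) {x : ℝ} (hx : ρ < |x|) : scut ψ ρ x = 0 :=
  hψ.2.2.2.1 _ (by rwa [abs_div, abs_of_pos hρ, one_lt_div hρ])

lemma scut_eq_one (hψ : IsCutoff ψ) (hρ : 0 < ρ) {x : ℝ} (hx : |x| ≤ ρ / 2) : scut ψ ρ x = 1 :=
  hψ.2.2.2.2 _ (by
    rw [abs_div, abs_of_pos hρ, div_le_iff₀ hρ]
    linarith)

lemma abs_deriv_scut_le (hψ : IsCutoff ψ) (hρ : 0 < ρ) (hB : ∀ x, |deriv ψ x| ≤ B * |x|)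
    (x : ℝ) : |deriv (scut ψ ρ) x| ≤ B * |x| / ρ ^ 2 := by
  have hderiv : HasDerivAt (scut ψ ρ) (deriv ψ (x / ρ) * (1 / ρ)) x :=
    (hψ.1.differentiable (by simp) (x / ρ)).hasDerivAt.comp x ((hasDerivAt_id x).div_const ρ)
  rw [hderiv.deriv, abs_mul, abs_of_pos (by positivity : 0 < 1 / ρ)]
  calc |deriv ψ (x / ρ)| * (1 / ρ) ≤ B * |x / ρ| * (1 / ρ) := by
        gcongr
        exact hB (x / ρ)
    _ = B * |x| / ρ ^ 2 := by
        rw [abs_div, abs_of_pos hρ]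
        field_simp

lemma isLocalCutoff_scut (hψ : IsCutoff ψ) (hρ : 0 < ρ) (hρε : ρ ^ 2 ≤ ε) {C : ℝ}
    (hB : ∀ x, |deriv ψ x| ≤ B * |x|) (hBC : B * ε ≤ C * ρ ^ 2) :
    IsLocalCutoff ε C (scut ψ ρ) where
  contDiff := hψ.contDiff_scut ρ
  even x := by rw [scut, scut, neg_div, hψ.2.1]
  abs_le_one := hψ.abs_scut_le_one ρ
  eq_zero x hx := hψ.scut_eq_zero hρ <| by
    rw [← abs_of_pos hρ]
    exact sq_lt_sq.1 (hρε.trans_lt hx)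
  abs_deriv_le x := by
    refine (hψ.abs_deriv_scut_le hρ hB x).trans ?_
    rw [div_le_div_iff₀ (by positivity) ((by positivity : 0 < ρ ^ 2).trans_le hρε)]
    nlinarith [mul_le_mul_of_nonneg_right hBC (abs_nonneg x)]

end IsCutoff

end Cutoff

section Gap

variable {δ ε A B C ρ : ℝ} {ψ u : ℝ → ℝ}

/-- The gap `u = f + g` between two curves on `(-δ, δ)` which are tangent at `0`, up to the
vertical offset `2ε`; by `neg_le`, the offset keeps them apart for `|x| < √ε`. -/
structure IsGap (δ A ε : ℝ) (u : ℝ → ℝ) : Prop where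
  contDiffOn : ContDiffOn ℝ 1 u (Ioo (-δ) δ)
  map_zero : u 0 = 0
  abs_deriv_le : ∀ x ∈ Ioo (-δ) δ, |deriv u x| ≤ A * |x|
  neg_le : ∀ x, x ^ 2 < ε → -ε ≤ u x

/-- The width `2ε + u`, cut off to the scale `ρ` so that it becomes a function on the whole
line. -/
def gapWidth (ψ : ℝ → ℝ) (ε ρ : ℝ) (u : ℝ → ℝ) (x : ℝ) : ℝ := 2 * ε + scut ψ ρ x * u x

namespace IsGap

lemma contDiffAt (hu : IsGap δ A ε u) {x : ℝ} (hx : |x| < δ) : ContDiffAt ℝ 1 u x :=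
  hu.contDiffOn.contDiffAt (isOpen_Ioo.mem_nhds (abs_lt.1 hx))

lemma abs_le (hu : IsGap δ A ε u) (hA : 0 ≤ A) {x : ℝ} (hx : |x| < δ) : |u x| ≤ A * x ^ 2 := by
  have hseg {y : ℝ} (hy : y ∈ uIcc 0 x) : |y| ≤ |x| := by
    simpa using abs_sub_left_of_mem_uIcc hy
  have := (convex_uIcc 0 x).norm_image_sub_le_of_norm_deriv_le (f := u) (C := A * |x|)
    (fun y hy => (hu.contDiffAt ((hseg hy).trans_lt hx)).differentiableAt one_ne_zero)
    (fun y hy => (hu.abs_deriv_le y (abs_lt.1 ((hseg hy).trans_lt hx))).trans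
      (mul_le_mul_of_nonneg_left (hseg hy) hA)) left_mem_uIcc right_mem_uIcc
  simpa [hu.map_zero, mul_assoc, ← sq] using this

end IsGap

lemma gapWidth_eventuallyEq (hψ : IsCutoff ψ) (hρ : 0 < ρ) {x : ℝ} (hx : ρ < |x|) :
    gapWidth ψ ε ρ u =ᶠ[𝓝 x] fun _ => 2 * ε := by
  filter_upwards [continuous_abs.continuousAt.eventually (lt_mem_nhds hx)] with y hy
  rw [gapWidth, hψ.scut_eq_zero hρ hy, zero_mul, add_zero]

lemma contDiff_gapWidth (hψ : IsCutoff ψ) (hu : IsGap δ A ε u) (hρ : 0 < ρ) (hρδ : ρ < δ) :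
    ContDiff ℝ 1 (gapWidth ψ ε ρ u) := by
  refine contDiff_iff_contDiffAt.2 fun x => ?_
  rcases lt_or_ge |x| δ with hx | hx
  · exact contDiffAt_const.add ((hψ.contDiff_scut ρ).contDiffAt.mul (hu.contDiffAt hx))
  · exact contDiffAt_const.congr_of_eventuallyEq (gapWidth_eventuallyEq hψ hρ (hρδ.trans_le hx))

lemma abs_deriv_gapWidth_le (hψ : IsCutoff ψ) (hA : 0 ≤ A) (hu : IsGap δ A ε u) (hρ : 0 < ρ)
    (hρδ : ρ < δ) (hB₀ : 0 ≤ B) (hB : ∀ x, |deriv ψ x| ≤ B * |x|) (x : ℝ) :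
    |deriv (gapWidth ψ ε ρ u) x| ≤ (B + 1) * A * |x| := by
  rcases lt_or_ge ρ |x| with hx | hx
  · rw [(gapWidth_eventuallyEq hψ hρ hx).deriv_eq, deriv_const, abs_zero]
    positivity
  have hxδ : |x| < δ := hx.trans_lt hρδ
  have hderiv : HasDerivAt (gapWidth ψ ε ρ u)
      (deriv (scut ψ ρ) x * u x + scut ψ ρ x * deriv u x) x :=
    (((hψ.contDiff_scut ρ).differentiable one_ne_zero x).hasDerivAt.fun_mul
      ((hu.contDiffAt hxδ).differentiableAt one_ne_zero).hasDerivAt).const_add (2 * ε)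
  have hx2 : x ^ 2 ≤ ρ ^ 2 := sq_le_sq.2 (hx.trans (le_abs_self ρ))
  have hcut : |deriv (scut ψ ρ) x| * |u x| ≤ B * A * |x| := by
    calc |deriv (scut ψ ρ) x| * |u x| ≤ B * |x| / ρ ^ 2 * (A * ρ ^ 2) := by
          gcongr
          exacts [hψ.abs_deriv_scut_le hρ hB x, (hu.abs_le hA hxδ).trans (by gcongr)]
      _ = B * A * |x| := by field_simp
  have hgap : |scut ψ ρ x| * |deriv u x| ≤ 1 * (A * |x|) := by
    gcongr
    exacts [hψ.abs_scut_le_one ρ x, hu.abs_deriv_le x (abs_lt.1 hxδ)]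
  rw [hderiv.deriv]
  refine (abs_add_le _ _).trans ?_
  rw [abs_mul, abs_mul]
  linarith

lemma isWidth_gapWidth (hψ : IsCutoff ψ) (hε : 0 < ε) (hA : 0 ≤ A) (hu : IsGap δ A ε u)
    (hρ : 0 < ρ) (hρδ : ρ < δ) (hρε : ρ ^ 2 < ε) (hB₀ : 0 ≤ B)
    (hB : ∀ x, |deriv ψ x| ≤ B * |x|) :
    IsWidth ε ((B + 1) * (A + 2)) (gapWidth ψ ε ρ u) where
  contDiff := contDiff_gapWidth hψ hu hρ hρδ
  le_apply x := by
    rcases lt_or_ge ρ |x| with hx | hx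
    · rw [(gapWidth_eventuallyEq hψ hρ hx).eq_of_nhds]
      linarith
    · have hux : -ε ≤ u x := hu.neg_le x ((sq_le_sq.2 (hx.trans (le_abs_self ρ))).trans_lt hρε)
      have hψx := hψ.2.2.1 (x / ρ)
      rw [gapWidth, scut]
      nlinarith [hψx.1, hψx.2]
  apply_le x := by
    have hcut : |scut ψ ρ x * u x| ≤ A * ε := by
      rcases lt_or_ge ρ |x| with hx | hx
      · rw [hψ.scut_eq_zero hρ hx, zero_mul, abs_zero]
        positivity
      · have hx2 : x ^ 2 ≤ ε := (sq_le_sq.2 (hx.trans (le_abs_self ρ))).trans hρε.le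
        rw [abs_mul]
        exact (mul_le_of_le_one_left (abs_nonneg _) (hψ.abs_scut_le_one ρ x)).trans
          ((hu.abs_le hA (hx.trans_lt hρδ)).trans (by gcongr))
    rw [gapWidth]
    nlinarith [le_abs_self (scut ψ ρ x * u x), mul_nonneg (mul_nonneg hB₀ hA) hε.le,
      mul_nonneg hB₀ hε.le]
  abs_deriv_le x := by
    refine (abs_deriv_gapWidth_le hψ hA hu hρ hρδ hB₀ hB x).trans ?_
    gcongr
    linarith

end Gap

section Hypotheses

variable {δ A ε : ℝ} {f g φ : ℝ → ℝ}

lemma InC2.exists_lipschitzWith (hφ : InC2 δ ε φ) : ∃ L, LipschitzWith L φ :=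
  hφ.1.lipschitzWith_of_hasCompactSupport hφ.2.1 one_ne_zero

lemma InC2.abs_le_truncPoisson (hφ : InC2 δ ε φ) (hε : 0 ≤ ε) (x : ℝ) :
    |φ x| ≤ truncPoisson ε δ x := by
  by_cases hx : x ∈ Ioo (-δ) δ
  · rw [truncPoisson_of_abs_le (abs_lt.2 hx).le, ← sq_abs x]
    exact (hφ.2.2.2 x hx).1
  · rw [image_eq_zero_of_notMem_tsupport fun h => hx (hφ.2.2.1 h), abs_zero]
    exact truncPoisson_nonneg hε δ x

lemma abs_deriv_le_of_abs_iteratedDerivWithin_two_le {u : ℝ → ℝ} (hδ : 0 < δ)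
    (hu : ContDiffOn ℝ 2 u (Ioo (-δ) δ)) (hu₀ : deriv u 0 = 0)
    (hA : ∀ x ∈ Ioo (-δ) δ, |iteratedDerivWithin 2 u (Ioo (-δ) δ) x| ≤ A) :
    ∀ x ∈ Ioo (-δ) δ, |deriv u x| ≤ A * |x| := by
  intro x hx
  have hderiv : ∀ y ∈ Ioo (-δ) δ, iteratedDerivWithin 2 u (Ioo (-δ) δ) y = deriv (deriv u) y := by
    intro y hy
    rw [iteratedDerivWithin_of_isOpen isOpen_Ioo hy, iteratedDeriv_succ, iteratedDeriv_one]
  have hdiff : ∀ y ∈ Ioo (-δ) δ, DifferentiableAt ℝ (deriv u) y := fun y hy =>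
    (((contDiffOn_succ_iff_deriv_of_isOpen (n := 1) isOpen_Ioo).1 hu).2.2.differentiableOn
      one_ne_zero).differentiableAt (isOpen_Ioo.mem_nhds hy)
  have := (convex_Ioo (-δ) δ).norm_image_sub_le_of_norm_deriv_le hdiff
    (fun y hy => (hderiv y hy ▸ hA y hy)) ⟨neg_lt_zero.2 hδ, hδ⟩ hx
  simpa [hu₀] using this

lemma GoodFG.isGap (h : GoodFG δ A ε f g) (hδ : 0 < δ) : IsGap δ A ε (f + g) := by
  obtain ⟨hf, hg, hf₀, hg₀, hf'₀, hg'₀, hbound, hgap⟩ := h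
  have hmem₀ : (0 : ℝ) ∈ Ioo (-δ) δ := ⟨neg_lt_zero.2 hδ, hδ⟩
  have hdiff {u : ℝ → ℝ} (hu : ContDiffOn ℝ 5 u (Ioo (-δ) δ)) : DifferentiableAt ℝ u 0 :=
    (hu.contDiffAt (isOpen_Ioo.mem_nhds hmem₀)).differentiableAt (by norm_num)
  refine ⟨(hf.add hg).of_le (by norm_num), by simp [hf₀, hg₀], ?_, fun x hx => ?_⟩
  · refine abs_deriv_le_of_abs_iteratedDerivWithin_two_le hδ ((hf.add hg).of_le (by norm_num))
      ?_ fun x hx => ?_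
    · rw [derivWithin_of_isOpen isOpen_Ioo hmem₀] at hf'₀ hg'₀
      rw [deriv_add (hdiff hf) (hdiff hg), hf'₀, hg'₀, add_zero]
    · rw [iteratedDerivWithin_add hx (uniqueDiffOn_Ioo _ _) ((hf x hx).of_le (by norm_num))
        ((hg x hx).of_le (by norm_num))]
      exact (abs_add_le _ _).trans (hbound x hx 2 (by norm_num))
  · have hx' : x ∈ Ioo (-(4 * √ε)) (4 * √ε) := by
      have hx₁ : |x| < √ε := lt_sqrt_of_sq_lt (by rwa [sq_abs])
      exact abs_lt.1 (hx₁.trans_le (by linarith [sqrt_nonneg ε]))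
    exact hgap x hx' x hx'

end Hypotheses

section Commutator

variable {δ ε A B : ℝ} {L : NNReal} {ψ f g X φ : ℝ → ℝ}

lemma Hker_eq (hψ : IsCutoff ψ) (hε : 0 < ε) (hX : ∀ α, |α| ≤ √ε / 2 ^ 6 → X α = Xt ε f g α)
    (α β : ℝ) :
    Hker ψ ε f g α β = (α - β)⁻¹ * hilbertWeight (scut ψ (√ε / 2 ^ 6)) X α (α - β) := by
  rw [Hker, hilbertWeight]
  rcases lt_or_ge (√ε / 2 ^ 6) |α| with hα | hα
  · simp only [hψ.scut_eq_zero (by positivity) hα, mul_zero, zero_mul]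
  · rw [hX α hα]
    ring

lemma Mker_eq (hψ : IsCutoff ψ) (hε : 0 < ε) (hX : ∀ α, |α| ≤ √ε / 2 ^ 6 → X α = Xt ε f g α)
    (α β : ℝ) :
    Mker ψ ε f g α β = poissonWeight (scut ψ (√ε / 2 ^ 6)) X α (α - β) := by
  rw [Mker, poissonWeight]
  rcases lt_or_ge (√ε / 2 ^ 6) |α| with hα | hα
  · simp only [hψ.scut_eq_zero (by positivity) hα, mul_zero, zero_mul]
  · rw [hX α hα]

lemma Hstar_eq (hψ : IsCutoff ψ) (hε : 0 < ε) (hX : ∀ α, |α| ≤ √ε / 2 ^ 6 → X α = Xt ε f g α)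
    (F : ℝ → ℝ) :
    Hstar ψ ε f g F =
      fun β => (2 * π)⁻¹ * pvKernelOp (hilbertWeight (scut ψ (√ε / 2 ^ 6)) X) F β := by
  ext β
  rw [Hstar, pvI, pvKernelOp]
  congr 2
  ext r
  rw [kernelOp, ← integral_indicator (measurableSet_lt (by fun_prop) (by fun_prop))]
  congr 1
  ext α
  simp only [indicator, mem_ofPred_eq, truncKernel, truncInv, abs_sub_comm β α,
    Hker_eq hψ hε hX, ite_mul, zero_mul]

lemma Mstar_eq (hψ : IsCutoff ψ) (hε : 0 < ε) (hX : ∀ α, |α| ≤ √ε / 2 ^ 6 → X α = Xt ε f g α)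
    (F : ℝ → ℝ) :
    Mstar ψ ε f g F =
      fun β => (2 * π)⁻¹ * kernelOp (poissonWeight (scut ψ (√ε / 2 ^ 6)) X) F β := by
  ext β
  simp only [Mstar, kernelOp, Mker_eq hψ hε hX]

lemma Hstar_Mstar_sub_eq {Q : ℝ → ℝ} (hψ : IsCutoff ψ) (hε : 0 < ε)
    (hX : ∀ α, |α| ≤ √ε / 2 ^ 6 → X α = Xt ε f g α) (hQ : IsMajorant Q)
    (hp : IsHilbertWeight ε Q (hilbertWeight (scut ψ (√ε / 2 ^ 6)) X))
    (hq : IsPoissonWeight ε Q (poissonWeight (scut ψ (√ε / 2 ^ 6)) X))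
    (hφ : Integrable φ) {C : ℝ} (hφC : ∀ x, |φ x| ≤ C) (β : ℝ) :
    Hstar ψ ε f g (Mstar ψ ε f g φ) β - Mstar ψ ε f g (Hstar ψ ε f g φ) β =
      ((2 * π)⁻¹) ^ 2 *
        (pvKernelOp (hilbertWeight (scut ψ (√ε / 2 ^ 6)) X)
            (kernelOp (poissonWeight (scut ψ (√ε / 2 ^ 6)) X) φ) β -
          kernelOp (poissonWeight (scut ψ (√ε / 2 ^ 6)) X)
            (pvKernelOp (hilbertWeight (scut ψ (√ε / 2 ^ 6)) X) φ) β) := by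
  obtain ⟨K, hK⟩ := hq.exists_lipschitzWith_kernelOp hε hQ hφ
  simp only [Hstar_eq hψ hε hX, Mstar_eq hψ hε hX, kernelOp_const_mul,
    hp.pvKernelOp_const_mul hε.le hQ (abs_kernelOp_le hq.toIsDominated hQ hφC) hK]
  ring

lemma lintegral_pvKernelOp_commutator_le_of_truncPoisson {c R : ℝ} {p q : ℝ → ℝ → ℝ}
    (hε : 0 < ε) (hR : 0 ≤ R) (hεR : ε ^ 2 + R ^ 2 ≤ 1) (hc : 0 ≤ c)
    (hp : IsHilbertWeight ε (fun t => c * truncPoisson ε R t) p)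
    (hq : IsPoissonWeight ε (fun t => c * truncPoisson ε R t) q)
    (hφ : ∀ x, |φ x| ≤ truncPoisson ε R x) (hφL : LipschitzWith L φ) :
    ∫⁻ β, ‖pvKernelOp p (kernelOp q φ) β - kernelOp q (pvKernelOp p φ) β‖ₑ ≤
      ENNReal.ofReal ((2 * π) ^ 2 * (5 * c ^ 2 * ε * log (1 / ε))) := by
  have hP := isMajorant_truncPoisson hε R
  obtain ⟨C, hC⟩ := hP.exists_le
  have hφi : Integrable φ := hP.integrable.mono' hφL.continuous.aestronglyMeasurable
    (Eventually.of_forall hφ)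
  have hmass : ∫⁻ t, ENNReal.ofReal (c * truncPoisson ε R t) ≤
      ENNReal.ofReal c * ENNReal.ofReal π := by
    simp only [ENNReal.ofReal_mul hc]
    rw [lintegral_const_mul _ hP.measurable.ennreal_ofReal]
    gcongr
    exact lintegral_truncPoisson_le hε hR
  have hmoment : ∫⁻ γ, shiftedMoment (fun t => c * truncPoisson ε R t) γ * ‖φ γ‖ₑ ≤
      ENNReal.ofReal c * (2 * ENNReal.ofReal π * ENNReal.ofReal (2 * ε * log (1 / ε))) := by
    refine le_trans (lintegral_mono fun γ => ?_) <|
      (lintegral_const_mul' _ _ ENNReal.ofReal_ne_top).trans_le <|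
        mul_le_mul_right (lintegral_shiftedMoment_truncPoisson_mul_le hε hR hεR) _
    rw [shiftedMoment_const_mul _ hc, mul_assoc, enorm_eq_ofReal_abs]
    gcongr
    exact hφ γ
  calc _ ≤ 5 * (ENNReal.ofReal c * ENNReal.ofReal π) * (ENNReal.ofReal c *
        (2 * ENNReal.ofReal π * ENNReal.ofReal (2 * ε * log (1 / ε)))) :=
        (lintegral_pvKernelOp_commutator_le hε (hP.const_mul hc) hp hq hφi
          (fun x => (hφ x).trans (hC x)) hφL).trans (by gcongr)
    _ = ENNReal.ofReal ((2 * π) ^ 2 * (5 * c ^ 2 * ε * log (1 / ε))) := by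
        rw [← ENNReal.ofReal_ofNat 5, ← ENNReal.ofReal_ofNat 2,
          ← ENNReal.ofReal_mul (by positivity), ← ENNReal.ofReal_mul (by positivity),
          ← ENNReal.ofReal_mul (by positivity), ← ENNReal.ofReal_mul (by positivity),
          ← ENNReal.ofReal_mul (by positivity), ← ENNReal.ofReal_mul (by positivity)]
        ring_nf

lemma eLpNorm_commutator_le {R : ℝ} (hψ : IsCutoff ψ) (hε : 0 < ε) (hR : 0 ≤ R) (hεR : ε ≤ R ^ 2)
    (hεR₁ : ε ^ 2 + R ^ 2 ≤ 1) (hχ : IsLocalCutoff ε B (scut ψ (√ε / 2 ^ 6)))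
    (hX : IsWidth ε B X) (hXt : ∀ α, |α| ≤ √ε / 2 ^ 6 → X α = Xt ε f g α)
    (hφ : ∀ x, |φ x| ≤ truncPoisson ε R x) (hφL : LipschitzWith L φ) :
    eLpNorm (fun α => Hstar ψ ε f g (Mstar ψ ε f g φ) α -
        Mstar ψ ε f g (Hstar ψ ε f g φ) α) 1 volume ≤
      ENNReal.ofReal (5 * (5 * B ^ 3) ^ 2 * ε * log (1 / ε)) := by
  have hB := hX.one_le hε
  have hP := isMajorant_truncPoisson hε R
  obtain ⟨C, hC⟩ := hP.exists_le
  have hφi : Integrable φ := hP.integrable.mono' hφL.continuous.aestronglyMeasurable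
    (Eventually.of_forall hφ)
  have hc : 0 ≤ 5 * B ^ 3 := by positivity
  have hp := isHilbertWeight_hilbertWeight hε hR hεR hχ hX
  have hq := isPoissonWeight_poissonWeight hε (by nlinarith) hR hεR hχ hX
  rw [eLpNorm_one_eq_lintegral_enorm]
  simp only [Hstar_Mstar_sub_eq hψ hε hXt (hP.const_mul hc) hp hq hφi
    (fun x => (hφ x).trans (hC x)), enorm_mul]
  rw [lintegral_const_mul' _ _ enorm_ne_top, enorm_of_nonneg (by positivity)]
  calc _ ≤ ENNReal.ofReal ((2 * π)⁻¹ ^ 2) *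
        ENNReal.ofReal ((2 * π) ^ 2 * (5 * (5 * B ^ 3) ^ 2 * ε * log (1 / ε))) := by
        gcongr
        exact lintegral_pvKernelOp_commutator_le_of_truncPoisson hε hR hεR₁ hc hp hq hφ hφL
    _ = ENNReal.ofReal (5 * (5 * B ^ 3) ^ 2 * ε * log (1 / ε)) := by
        rw [← ENNReal.ofReal_mul (by positivity)]
        congr 1
        field_simp

theorem commutator_estimate_general {A : ℝ} (hA : 0 ≤ A) (hψ : IsCutoff ψ) :
    ∃ C : ℝ, 0 < C ∧
      ∀ δ ∈ Ioc (0 : ℝ) (1 / 2), ∀ ε ∈ Ioc 0 (δ ^ 2),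
      ∀ f g : ℝ → ℝ, IsGap δ A ε (f + g) →
      ∀ (φ : ℝ → ℝ) (L : ℝ≥0), LipschitzWith L φ → (∀ x, |φ x| ≤ truncPoisson ε δ x) →
        eLpNorm (fun α => Hstar ψ ε f g (Mstar ψ ε f g φ) α -
            Mstar ψ ε f g (Hstar ψ ε f g φ) α) 1 volume ≤
          ENNReal.ofReal (C * ε * log (1 / ε)) := by
  obtain ⟨B₀, hB₀, hψB⟩ := hψ.exists_abs_deriv_le
  set B := (2 ^ 6) ^ 2 * ((B₀ + 1) * (A + 2))
  refine ⟨5 * (5 * B ^ 3) ^ 2, by positivity, fun δ ⟨hδ, hδ₁⟩ ε ⟨hε, hεδ⟩ f g hfg φ L hφL hφ => ?_⟩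
  have hsq : √ε ^ 2 = ε := sq_sqrt hε.le
  have hδ₂ : δ ^ 2 ≤ 1 / 4 := by nlinarith
  have hs : 0 < √ε := sqrt_pos.2 hε
  have hsδ : √ε ≤ δ := sqrt_le_left hδ.le |>.2 hεδ
  have hχ : IsLocalCutoff ε B (scut ψ (√ε / 2 ^ 6)) := by
    refine hψ.isLocalCutoff_scut (by positivity) ?_ hψB ?_
    · rw [div_pow, hsq]
      exact div_le_self hε.le (by norm_num)
    · rw [div_pow, hsq, mul_div_left_comm, mul_div_cancel_left₀ _ (by norm_num), mul_comm]
      gcongr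
      nlinarith
  have hX : IsWidth ε B (gapWidth ψ ε (√ε / 2 ^ 5) (f + g)) := by
    refine (isWidth_gapWidth hψ hε hA hfg (by positivity) ?_ ?_ hB₀ hψB).mono hε.le ?_
    · exact (div_lt_self hs (by norm_num)).trans_le hsδ
    · rw [div_pow, hsq]
      exact div_lt_self hε (by norm_num)
    · exact le_mul_of_one_le_left (by positivity) (by norm_num)
  have hXt (α : ℝ) (hα : |α| ≤ √ε / 2 ^ 6) :
      gapWidth ψ ε (√ε / 2 ^ 5) (f + g) α = Xt ε f g α := by
    rw [gapWidth, hψ.scut_eq_one (by positivity) (by linarith), Xt, Pi.add_apply]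
    ring
  exact eLpNorm_commutator_le hψ hε hδ.le hεδ (by nlinarith) hχ hX hXt hφ hφL

end Commutator

/-- **Commutator estimate (Lemma 3.5).**  For every `φ ∈ C₂`,
`‖H*M*φ − M*H*φ‖_{L¹(ℝ)} ≲ ε log(1/ε)`, with the constant depending only on `A`, `δ`
(and `ψ`). -/
theorem commutator_estimate (δ A : ℝ) (hδ : δ ∈ Ioc (0:ℝ) (1/100)) (hA : 1 ≤ A)
    (ψ : ℝ → ℝ) (hψ : IsCutoff ψ) :
    ∃ C : ℝ, 0 < C ∧
      ∀ ε : ℝ, ε ∈ Ioc (0:ℝ) (δ ^ 2 / 100) →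
      ∀ f g : ℝ → ℝ, GoodFG δ A ε f g →
      ∀ φ : ℝ → ℝ, InC2 δ ε φ →
        eLpNorm (fun α => Hstar ψ ε f g (Mstar ψ ε f g φ) α -
            Mstar ψ ε f g (Hstar ψ ε f g φ) α) 1 volume ≤
          ENNReal.ofReal (C * ε * Real.log (1 / ε)) := by
  obtain ⟨C, hC, hCε⟩ := commutator_estimate_general (zero_le_one.trans hA) hψ
  refine ⟨C, hC, fun ε ⟨hε, hεδ⟩ f g hfg φ hφ => ?_⟩
  obtain ⟨L, hφL⟩ := hφ.exists_lipschitzWith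
  exact hCε δ ⟨hδ.1, hδ.2.trans (by norm_num)⟩ ε ⟨hε, hεδ.trans (by linarith [sq_nonneg δ])⟩ f g
    (hfg.isGap hδ.1) φ L hφL (hφ.abs_le_truncPoisson hε.le)
end
end

section
/- Pointwise bound on H*φ (estimate (pi110) in the proof of Lemma 3.2): For every φ ∈ C₂ and every β ∈ I_δ, one has |H*φ(β)| ≲ ε²/(ε³ + |β|³). -/
noncomputable section
open Set MeasureTheory Filter Real

/-!
Near `β`, freeze the coefficients of the kernel of `H*`: replace the width `X̃(α)` and the cut-off
test function at `α` by their values at `β`. The frozen kernel is odd in `α - β`, so it contributes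
nothing to the principal value. What remains is absolutely integrable. With `b = |β| + ε`, the
points with `|α - β| ≤ b / 2` satisfy `ε + |α| ≥ b / 2`, so there the Lipschitz bounds on the width
and on the test function cancel the singularity and leave `O(ε / b³)` times
`ε² / ((α - β)² + ε²)`. Elsewhere `1 / |α - β| ≤ 2 / b` and the decay of the test function give
`O(ε / b³)` times `ε² / (α² + ε²)`. Both majorants have integral `O(ε² / b³)`.
-/

section PrincipalValue

open scoped Topology

variable {V : Type*} [NormedAddCommGroup V] [NormedSpace ℝ V] {E F : ℝ → ℝ} {β : ℝ}

lemma aecover_lt_abs_sub (β : ℝ) :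
    AECover volume (𝓝[>] (0 : ℝ)) fun r => {α : ℝ | r < |β - α|} where
  ae_eventually_mem := by
    filter_upwards [Measure.ae_ne volume β] with α hα
    exact nhdsWithin_le_nhds (Iio_mem_nhds (abs_pos.2 (sub_ne_zero.2 hα.symm)))
  measurableSet _ := measurableSet_lt measurable_const (by fun_prop)

lemma integral_eq_zero_of_odd_about {E : ℝ → V} (hE : ∀ s, E (β - s) = -E (β + s)) :
    ∫ α, E α = 0 := by
  have : IsAddTorsionFree V := .of_isTorsionFree ℝ V
  refine self_eq_neg.1 ?_
  calc ∫ α, E α = ∫ s, E (β - s) := (integral_sub_left_eq_self E volume β).symm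
    _ = -∫ s, E (β + s) := by simp only [hE, integral_neg]
    _ = -∫ α, E α := by rw [integral_add_left_eq_self E β]

lemma setIntegral_lt_abs_sub_eq_zero_of_odd_about {E : ℝ → V}
    (hE : ∀ s, E (β - s) = -E (β + s)) (r : ℝ) : ∫ α in {α : ℝ | r < |β - α|}, E α = 0 := by
  rw [← integral_indicator ((aecover_lt_abs_sub β).measurableSet r)]
  refine integral_eq_zero_of_odd_about (β := β) fun s => ?_
  simp only [indicator_apply, mem_ofPred_eq, sub_sub_cancel, sub_add_cancel_left, abs_neg, hE]
  split_ifs <;> simp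

lemma pvI_eq_integral_sub_of_odd_about (hE : ∀ s, E (β - s) = -E (β + s))
    (hEint : ∀ r > 0, IntegrableOn E {α : ℝ | r < |β - α|})
    (hFE : Integrable fun α => F α - E α) :
    pvI F β = ∫ α, (F α - E α) := by
  have hlim := (aecover_lt_abs_sub β).integral_tendsto_of_countably_generated hFE
  refine (hlim.congr' ?_).limUnder_eq
  filter_upwards [self_mem_nhdsWithin] with r hr
  have hF : IntegrableOn F {α : ℝ | r < |β - α|} := by
    refine (hFE.integrableOn.add (hEint r hr)).congr_fun (fun α _ => ?_)
      ((aecover_lt_abs_sub β).measurableSet r)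
    exact sub_add_cancel (F α) (E α)
  rw [integral_sub hF (hEint r hr), setIntegral_lt_abs_sub_eq_zero_of_odd_about hE, sub_zero]

end PrincipalValue

section Lorentzian

variable {ε L X Y s : ℝ}

/-- The Lorentzian profile `X² / (s² + X²)` of width `X`: the factor by which the kernel of `H`
differs from the Hilbert kernel `1 / s`. It takes the junk value `0` at `s = X = 0`. -/
def lorentzian (X s : ℝ) : ℝ := X ^ 2 / (s ^ 2 + X ^ 2)

lemma lorentzian_nonneg (X s : ℝ) : 0 ≤ lorentzian X s := by
  unfold lorentzian; positivity

lemma lorentzian_le_one (X s : ℝ) : lorentzian X s ≤ 1 :=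
  div_le_one_of_le₀ (le_add_of_nonneg_left (sq_nonneg s)) (by positivity)

lemma lorentzian_neg (X s : ℝ) : lorentzian X (-s) = lorentzian X s := by
  rw [lorentzian, lorentzian, neg_sq]

@[fun_prop]
lemma measurable_lorentzian_uncurry : Measurable fun p : ℝ × ℝ => lorentzian p.1 p.2 := by
  unfold lorentzian; fun_prop

lemma lorentzian_eq_inv_one_add_sq (hX : X ≠ 0) (s : ℝ) :
    lorentzian X s = (1 + (s / X) ^ 2)⁻¹ := by
  unfold lorentzian; field_simp; ring

lemma integrable_lorentzian (hX : X ≠ 0) : Integrable (lorentzian X) := by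
  simp only [funext (lorentzian_eq_inv_one_add_sq hX)]
  exact integrable_inv_one_add_sq.comp_div hX

lemma integral_lorentzian (hX : 0 < X) : ∫ s, lorentzian X s = X * π := by
  simp only [lorentzian_eq_inv_one_add_sq hX.ne']
  rw [Measure.integral_comp_div (fun x : ℝ => (1 + x ^ 2)⁻¹), integral_univ_inv_one_add_sq,
    abs_of_pos hX, smul_eq_mul]

lemma lorentzian_le_sq_mul (hε : 0 < ε) (hX : ε ≤ X) (hXL : X ≤ L * ε) (s : ℝ) :
    lorentzian X s ≤ L ^ 2 * lorentzian ε s := by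
  have hX0 : 0 < X := hε.trans_le hX
  calc X ^ 2 / (s ^ 2 + X ^ 2) ≤ (L * ε) ^ 2 / (s ^ 2 + ε ^ 2) := by gcongr
    _ = L ^ 2 * (ε ^ 2 / (s ^ 2 + ε ^ 2)) := by ring

lemma abs_lorentzian_sub_le (hε : 0 < ε) (hX : ε ≤ X) (hXL : X ≤ L * ε) (hY : ε ≤ Y)
    (hYL : Y ≤ L * ε) (s : ℝ) :
    |lorentzian X s - lorentzian Y s| ≤ 2 * L / ε * |X - Y| * lorentzian ε s := by
  have hX0 : 0 < X := hε.trans_le hX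
  have hY0 : 0 < Y := hε.trans_le hY
  have hLε : 0 ≤ L * ε := hX0.le.trans hXL
  have factorization : lorentzian X s - lorentzian Y s
      = (X - Y) * (X + Y) / (s ^ 2 + X ^ 2) * (s ^ 2 / (s ^ 2 + Y ^ 2)) := by
    unfold lorentzian; field_simp; ring
  have hratio : s ^ 2 / (s ^ 2 + Y ^ 2) ≤ 1 :=
    div_le_one_of_le₀ (le_add_of_nonneg_right (sq_nonneg Y)) (by positivity)
  rw [factorization, abs_mul, abs_div, abs_mul, abs_of_pos (add_pos hX0 hY0),
    abs_of_pos (by positivity : 0 < s ^ 2 + X ^ 2),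
    abs_of_nonneg (by positivity : 0 ≤ s ^ 2 / (s ^ 2 + Y ^ 2))]
  calc |X - Y| * (X + Y) / (s ^ 2 + X ^ 2) * (s ^ 2 / (s ^ 2 + Y ^ 2))
      ≤ |X - Y| * (L * ε + L * ε) / (s ^ 2 + ε ^ 2) * 1 := by gcongr
    _ = 2 * L / ε * |X - Y| * lorentzian ε s := by unfold lorentzian; field_simp; ring

end Lorentzian

section Cutoff

open scoped NNReal

variable {K : ℝ≥0} {ψ : ℝ → ℝ} {r : ℝ}

/-- An even `K`-Lipschitz cutoff, bounded by `1` in absolute value and supported in `[-1, 1]`, as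
used to localize the kernel of `H`. -/
structure IsLipschitzCutoff (K : ℝ≥0) (ψ : ℝ → ℝ) : Prop where
  lipschitz : LipschitzWith K ψ
  even : ∀ x, ψ (-x) = ψ x
  abs_le_one : ∀ x, |ψ x| ≤ 1
  eq_zero_of_one_lt : ∀ x, 1 < |x| → ψ x = 0

lemma IsCutoff.exists_isLipschitzCutoff (hψ : IsCutoff ψ) : ∃ K, IsLipschitzCutoff K ψ := by
  obtain ⟨hsmooth, heven, hIcc, hzero, -⟩ := hψ
  have hsupp : HasCompactSupport ψ := by
    refine HasCompactSupport.intro (isCompact_Icc (a := (-1 : ℝ)) (b := 1)) fun x hx => hzero x ?_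
    rwa [mem_Icc, ← abs_le, not_le] at hx
  obtain ⟨K, hK⟩ := hsmooth.lipschitzWith_of_hasCompactSupport hsupp (by simp)
  exact ⟨K, hK, heven, fun x => (abs_of_nonneg (hIcc x).1).trans_le (hIcc x).2, hzero⟩

namespace IsLipschitzCutoff

lemma abs_scut_le_one (hψ : IsLipschitzCutoff K ψ) (r x : ℝ) : |scut ψ r x| ≤ 1 :=
  hψ.abs_le_one _

lemma abs_scut_mul_le (hψ : IsLipschitzCutoff K ψ) (r x a : ℝ) : |scut ψ r x * a| ≤ |a| := by
  rw [abs_mul]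
  exact mul_le_of_le_one_left (abs_nonneg a) (hψ.abs_le_one _)

lemma scut_neg (hψ : IsLipschitzCutoff K ψ) (r x : ℝ) : scut ψ r (-x) = scut ψ r x := by
  rw [scut, neg_div, hψ.even, scut]

lemma scut_eq_zero (hψ : IsLipschitzCutoff K ψ) (hr : 0 < r) {x : ℝ} (hx : r < |x|) :
    scut ψ r x = 0 :=
  hψ.eq_zero_of_one_lt _ (by rwa [abs_div, abs_of_pos hr, one_lt_div hr])

lemma abs_scut_sub_le (hψ : IsLipschitzCutoff K ψ) (hr : 0 < r) (x y : ℝ) :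
    |scut ψ r x - scut ψ r y| ≤ K / r * |x - y| :=
  calc |ψ (x / r) - ψ (y / r)| ≤ K * |x / r - y / r| := hψ.lipschitz.dist_le_mul _ _
    _ = K / r * |x - y| := by rw [← sub_div, abs_div, abs_of_pos hr]; ring

lemma measurable_scut (hψ : IsLipschitzCutoff K ψ) (r : ℝ) : Measurable (scut ψ r) :=
  hψ.lipschitz.continuous.measurable.comp (measurable_id.div_const r)

end IsLipschitzCutoff

end Cutoff

section Width

variable {δ A ε r L : ℝ} {X f g : ℝ → ℝ}

lemma norm_sub_le_of_norm_iteratedDerivWithin_two_le {V : Type*} [NormedAddCommGroup V]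
    [NormedSpace ℝ V] {s : Set ℝ} {c x y : ℝ} {f : ℝ → V} (hs : Convex ℝ s)
    (hs' : UniqueDiffOn ℝ s) (hf : ContDiffOn ℝ 2 f s) (hc : c ∈ s) (hfc : derivWithin f s c = 0)
    (hA : ∀ z ∈ s, ‖iteratedDerivWithin 2 f s z‖ ≤ A) (hx : x ∈ s) (hy : y ∈ s) :
    ‖f x - f y‖ ≤ A * max |x - c| |y - c| * |x - y| := by
  have hA0 : 0 ≤ A := (norm_nonneg _).trans (hA c hc)
  have hderiv_diff : DifferentiableOn ℝ (derivWithin f s) s :=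
    (hf.derivWithin (m := 1) hs' (by norm_num)).differentiableOn one_ne_zero
  have hderiv : ∀ z ∈ s, ‖derivWithin f s z‖ ≤ A * |z - c| := fun z hz => by
    simpa [hfc] using hs.norm_image_sub_le_of_norm_derivWithin_le hderiv_diff
      (fun w hw => by
        simpa only [iteratedDerivWithin_succ, iteratedDerivWithin_zero] using hA w hw) hc hz
  have hsegment : Convex ℝ (s ∩ Metric.closedBall c (max |x - c| |y - c|)) :=
    hs.inter (convex_closedBall _ _)
  refine hsegment.norm_image_sub_le_of_norm_hasDerivWithin_le (f' := derivWithin f s)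
    (fun z hz => ((hf.differentiableOn two_ne_zero z hz.1).hasDerivWithinAt).mono inter_subset_left)
    (fun z hz => (hderiv z hz.1).trans (by gcongr; exact hz.2))
    ⟨hy, le_max_right |x - c| |y - c|⟩ ⟨hx, le_max_left |x - c| |y - c|⟩

/-- `X` is a width comparable to `ε` on `[-2r, 2r]`, up to the factor `L`, whose Lipschitz constant
on `[-m, m]` is at most `L m`: the behaviour of `2ε + x²`. The function `X̃ = 2ε + f + g` of the
paper has this property. -/
structure IsPinchedWidth (ε r L : ℝ) (X : ℝ → ℝ) : Prop where
  le_width : ∀ x, |x| ≤ 2 * r → ε ≤ X x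
  width_le : ∀ x, |x| ≤ 2 * r → X x ≤ L * ε
  abs_sub_le : ∀ x y, |x| ≤ 2 * r → |y| ≤ 2 * r → |X x - X y| ≤ L * max |x| |y| * |x - y|

lemma IsPinchedWidth.one_le (hX : IsPinchedWidth ε r L X) (hε : 0 < ε) (hr : 0 ≤ r) : 1 ≤ L := by
  have h0 : |(0 : ℝ)| ≤ 2 * r := by rw [abs_zero]; positivity
  exact (le_mul_iff_one_le_left hε).1 ((hX.le_width 0 h0).trans (hX.width_le 0 h0))

lemma IsPinchedWidth.continuousOn (hX : IsPinchedWidth ε r L X) (hL : 0 ≤ L) :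
    ContinuousOn X (Icc (-(2 * r)) (2 * r)) := by
  suffices LipschitzOnWith (L * (2 * r)).toNNReal X (Icc (-(2 * r)) (2 * r)) from this.continuousOn
  refine LipschitzOnWith.of_dist_le_mul fun x hx y hy => ?_
  have hx' := abs_le.2 hx
  have hy' := abs_le.2 hy
  calc |X x - X y| ≤ L * max |x| |y| * |x - y| := hX.abs_sub_le x y hx' hy'
    _ ≤ L * (2 * r) * |x - y| := by gcongr; exact max_le hx' hy'
    _ ≤ (L * (2 * r)).toNNReal * |x - y| := by gcongr; exact Real.le_coe_toNNReal _

lemma abs_Xt_sub_le (hfg : GoodFG δ A ε f g) {x y : ℝ} (hx : x ∈ Ioo (-δ) δ)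
    (hy : y ∈ Ioo (-δ) δ) :
    |Xt ε f g x - Xt ε f g y| ≤ A * max |x| |y| * |x - y| := by
  obtain ⟨hf, hg, -, -, hf', hg', hA, -⟩ := hfg
  have hU : UniqueDiffOn ℝ (Ioo (-δ) δ) := uniqueDiffOn_Ioo _ _
  have h0 : (0 : ℝ) ∈ Ioo (-δ) δ := by constructor <;> linarith [hx.1, hx.2]
  have hsum' : derivWithin (f + g) (Ioo (-δ) δ) 0 = 0 := by
    rw [derivWithin_add (hf.differentiableOn (by norm_num) 0 h0)
      (hg.differentiableOn (by norm_num) 0 h0), hf', hg', add_zero]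
  have hsum'' : ∀ z ∈ Ioo (-δ) δ, ‖iteratedDerivWithin 2 (f + g) (Ioo (-δ) δ) z‖ ≤ A := by
    intro z hz
    rw [iteratedDerivWithin_add hz hU ((hf z hz).of_le (by norm_num))
      ((hg z hz).of_le (by norm_num))]
    exact (norm_add_le _ _).trans (hA z hz 2 (by norm_num))
  have hlip := norm_sub_le_of_norm_iteratedDerivWithin_two_le (convex_Ioo _ _) hU
    ((hf.add hg).of_le (by norm_num)) h0 hsum' hsum'' hx hy
  simpa [Xt, add_assoc] using hlip

lemma GoodFG.isPinchedWidth_Xt (hfg : GoodFG δ A ε f g) (hA : 0 ≤ A) (hε : 0 < ε)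
    (hr : 2 * r < δ) (hrε : r ^ 2 ≤ ε) :
    IsPinchedWidth ε r (2 + 4 * A) (Xt ε f g) := by
  have hmem : ∀ x, |x| ≤ 2 * r → x ∈ Ioo (-δ) δ := fun x hx => abs_lt.1 (hx.trans_lt hr)
  have hlip : ∀ x y, |x| ≤ 2 * r → |y| ≤ 2 * r →
      |Xt ε f g x - Xt ε f g y| ≤ A * max |x| |y| * |x - y| :=
    fun x y hx hy => abs_Xt_sub_le hfg (hmem x hx) (hmem y hy)
  obtain ⟨-, -, hf0, hg0, -, -, -, hgap⟩ := hfg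
  refine ⟨fun x hx => ?_, fun x hx => ?_, fun x y hx hy => (hlip x y hx hy).trans ?_⟩
  · have hx' : x ∈ Ioo (-(4 * √ε)) (4 * √ε) :=
      abs_lt.1 (by linarith [Real.le_sqrt_of_sq_le hrε, Real.sqrt_pos.2 hε])
    rw [Xt]
    linarith [hgap x hx' x hx']
  · have hXt0 : Xt ε f g 0 = 2 * ε := by rw [Xt, hf0, hg0, add_zero, add_zero]
    have hquadratic : |Xt ε f g x - 2 * ε| ≤ A * |x| ^ 2 := by
      simpa [hXt0, mul_assoc, ← sq] using hlip x 0 hx (by simpa using (abs_nonneg x).trans hx)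
    have hsq : |x| ^ 2 ≤ 4 * ε := by
      calc |x| ^ 2 ≤ (2 * r) ^ 2 := by gcongr
        _ ≤ 4 * ε := by linarith
    linarith [le_abs_self (Xt ε f g x - 2 * ε), mul_le_mul_of_nonneg_left hsq hA]
  · gcongr
    linarith

end Width

section Decay

variable {K : NNReal} {ψ φ : ℝ → ℝ} {δ ε r β x : ℝ}

/-- The bounds defining the class `C₂`, imposed on the whole line and without the condition on the
support. -/
structure HasC2Decay (ε : ℝ) (φ : ℝ → ℝ) : Prop where
  differentiable : Differentiable ℝ φ
  abs_le : ∀ x, |φ x| ≤ ε / (ε ^ 2 + |x| ^ 2)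
  abs_deriv_le : ∀ x, |deriv φ x| ≤ ε / (ε ^ 3 + |x| ^ 3)

lemma InC2.hasC2Decay (hφ : InC2 δ ε φ) (hε : 0 ≤ ε) : HasC2Decay ε φ := by
  obtain ⟨hC1, -, hsupp, hdecay⟩ := hφ
  refine ⟨hC1.differentiable one_ne_zero, fun x => ?_, fun x => ?_⟩
  · by_cases hx : φ x = 0
    · rw [hx, abs_zero]; positivity
    · exact (hdecay x (hsupp (subset_tsupport φ hx))).1
  · by_cases hx : deriv φ x = 0
    · rw [hx, abs_zero]; positivity
    · exact (hdecay x (hsupp (support_deriv_subset hx))).2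

lemma div_pow_add_pow_le {a b ε : ℝ} (hε : 0 < ε) (ha : 0 ≤ a) (hb : 0 < b)
    (hab : b ≤ 2 * (ε + a)) (n : ℕ) :
    ε / (ε ^ n + a ^ n) ≤ 2 ^ n * 2 ^ (n - 1) * ε / b ^ n := by
  rw [div_le_div_iff₀ (by positivity) (by positivity)]
  have hpow : b ^ n ≤ 2 ^ n * (2 ^ (n - 1) * (ε ^ n + a ^ n)) :=
    calc b ^ n ≤ (2 * (ε + a)) ^ n := by gcongr
      _ = 2 ^ n * (ε + a) ^ n := mul_pow _ _ _
      _ ≤ 2 ^ n * (2 ^ (n - 1) * (ε ^ n + a ^ n)) := by gcongr; exact add_pow_le hε.le ha n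
  calc ε * b ^ n ≤ ε * (2 ^ n * (2 ^ (n - 1) * (ε ^ n + a ^ n))) := by gcongr
    _ = 2 ^ n * 2 ^ (n - 1) * ε * (ε ^ n + a ^ n) := by ring

lemma abs_add_le_two_mul_add_abs (hx : |x - β| ≤ (|β| + ε) / 2) : |β| + ε ≤ 2 * (ε + |x|) := by
  linarith [abs_sub_abs_le_abs_sub β x, abs_sub_comm β x]

namespace HasC2Decay

lemma abs_le_lorentzian (hφ : HasC2Decay ε φ) (hε : ε ≠ 0) (x : ℝ) :
    |φ x| ≤ lorentzian ε x / ε :=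
  calc |φ x| ≤ ε / (ε ^ 2 + |x| ^ 2) := hφ.abs_le x
    _ = lorentzian ε x / ε := by unfold lorentzian; rw [sq_abs]; field_simp; ring

lemma abs_le_of_abs_sub_le (hφ : HasC2Decay ε φ) (hε : 0 < ε)
    (hx : |x - β| ≤ (|β| + ε) / 2) : |φ x| ≤ 8 * ε / (|β| + ε) ^ 2 :=
  calc |φ x| ≤ ε / (ε ^ 2 + |x| ^ 2) := hφ.abs_le x
    _ ≤ 2 ^ 2 * 2 ^ (2 - 1) * ε / (|β| + ε) ^ 2 :=
      div_pow_add_pow_le hε (abs_nonneg x) (by positivity) (abs_add_le_two_mul_add_abs hx) 2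
    _ = 8 * ε / (|β| + ε) ^ 2 := by norm_num

lemma abs_sub_le_of_abs_sub_le (hφ : HasC2Decay ε φ) (hε : 0 < ε)
    (hx : |x - β| ≤ (|β| + ε) / 2) :
    |φ x - φ β| ≤ 32 * ε / (|β| + ε) ^ 3 * |x - β| := by
  refine (convex_closedBall β ((|β| + ε) / 2)).norm_image_sub_le_of_norm_deriv_le
    (fun y _ => hφ.differentiable y) (fun y hy => ?_)
    (Metric.mem_closedBall_self (by positivity)) hx
  calc |deriv φ y| ≤ ε / (ε ^ 3 + |y| ^ 3) := hφ.abs_deriv_le y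
    _ ≤ 2 ^ 3 * 2 ^ (3 - 1) * ε / (|β| + ε) ^ 3 :=
      div_pow_add_pow_le hε (abs_nonneg y) (by positivity) (abs_add_le_two_mul_add_abs hy) 3
    _ = 32 * ε / (|β| + ε) ^ 3 := by norm_num

lemma abs_scut_mul_sub_le (hφ : HasC2Decay ε φ) (hψ : IsLipschitzCutoff K ψ) (hε : 0 < ε)
    (hr : 0 < r) (hβ : |β| + ε ≤ 3 * r) (hx : |x - β| ≤ (|β| + ε) / 2) :
    |scut ψ r x * φ x - scut ψ r β * φ β| ≤ (32 + 24 * K) * ε / (|β| + ε) ^ 3 * |x - β| := by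
  have hcutoff : |(scut ψ r x - scut ψ r β) * φ x| ≤ 24 * K * ε / (|β| + ε) ^ 3 * |x - β| := by
    rw [abs_mul]
    calc |scut ψ r x - scut ψ r β| * |φ x|
        ≤ K / r * |x - β| * (8 * ε / (|β| + ε) ^ 2) := by
          gcongr
          exacts [hψ.abs_scut_sub_le hr x β, hφ.abs_le_of_abs_sub_le hε hx]
      _ = 8 * K * ε * (|β| + ε) / (r * (|β| + ε) ^ 3) * |x - β| := by field_simp
      _ ≤ 8 * K * ε * (3 * r) / (r * (|β| + ε) ^ 3) * |x - β| := by gcongr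
      _ = 24 * K * ε / (|β| + ε) ^ 3 * |x - β| := by field_simp; ring
  have htest : |scut ψ r β * (φ x - φ β)| ≤ 32 * ε / (|β| + ε) ^ 3 * |x - β| := by
    exact (hψ.abs_scut_mul_le r β _).trans
      (hφ.abs_sub_le_of_abs_sub_le hε hx)
  calc |scut ψ r x * φ x - scut ψ r β * φ β|
      = |(scut ψ r x - scut ψ r β) * φ x + scut ψ r β * (φ x - φ β)| := by ring_nf
    _ ≤ 24 * K * ε / (|β| + ε) ^ 3 * |x - β| + 32 * ε / (|β| + ε) ^ 3 * |x - β| :=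
      (abs_add_le _ _).trans (add_le_add hcutoff htest)
    _ = (32 + 24 * K) * ε / (|β| + ε) ^ 3 * |x - β| := by ring

end HasC2Decay

end Decay

section FrozenKernel

variable {χ : ℝ → ℝ} {Y u ρ β : ℝ}

/-- The kernel of `H` as a function of the difference `s = α - β` and of the width `Y`, without the
cutoff in `α`: the Hilbert kernel `1 / s` damped by a Lorentzian and truncated by `χ`. -/
def dampedHilbertKernel (χ : ℝ → ℝ) (Y s : ℝ) : ℝ := s⁻¹ * χ s * lorentzian Y s

lemma dampedHilbertKernel_neg (hχ : ∀ s, χ (-s) = χ s) (Y s : ℝ) :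
    dampedHilbertKernel χ Y (-s) = -dampedHilbertKernel χ Y s := by
  rw [dampedHilbertKernel, hχ, lorentzian_neg, inv_neg, dampedHilbertKernel]; ring

lemma abs_dampedHilbertKernel_le (hχ : ∀ s, |χ s| ≤ 1) (Y s : ℝ) :
    |dampedHilbertKernel χ Y s| ≤ |s|⁻¹ * lorentzian Y s := by
  rw [dampedHilbertKernel, abs_mul, abs_mul, abs_inv, abs_of_nonneg (lorentzian_nonneg Y s)]
  have := lorentzian_nonneg Y s
  gcongr
  exact mul_le_of_le_one_right (by positivity) (hχ s)

lemma measurable_dampedHilbertKernel (hχ : Measurable χ) :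
    Measurable fun p : ℝ × ℝ => dampedHilbertKernel χ p.1 p.2 := by
  unfold dampedHilbertKernel; fun_prop

lemma measurable_dampedHilbertKernel_sub (hχ : Measurable χ) (Y β : ℝ) :
    Measurable fun α => dampedHilbertKernel χ Y (α - β) :=
  (measurable_dampedHilbertKernel hχ).comp
    (by fun_prop : Measurable fun α : ℝ => (Y, α - β))

/-- The integrand of `H*φ` at `β` with the width and the test function frozen at `β`, cut off at
distance `ρ` from `β`; `u` is the value of the test function. -/
def frozenIntegrand (χ : ℝ → ℝ) (Y u ρ β α : ℝ) : ℝ :=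
  indicator (Metric.closedBall β ρ) (fun α => dampedHilbertKernel χ Y (α - β) * u) α

lemma frozenIntegrand_odd_about (hχ : ∀ s, χ (-s) = χ s) (s : ℝ) :
    frozenIntegrand χ Y u ρ β (β - s) = -frozenIntegrand χ Y u ρ β (β + s) := by
  classical
  simp only [frozenIntegrand, indicator_apply, Metric.mem_closedBall, Real.dist_eq,
    sub_sub_cancel_left, add_sub_cancel_left, abs_neg, dampedHilbertKernel_neg hχ]
  split_ifs <;> simp

lemma measurable_frozenIntegrand (hχ : Measurable χ) :
    Measurable (frozenIntegrand χ Y u ρ β) :=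
  ((measurable_dampedHilbertKernel_sub hχ Y β).mul_const u).indicator
    Metric.isClosed_closedBall.measurableSet

lemma abs_frozenIntegrand_le (hχ : ∀ s, |χ s| ≤ 1) {r α : ℝ} (hr : 0 < r) (hα : r < |β - α|) :
    |frozenIntegrand χ Y u ρ β α| ≤ r⁻¹ * |u| := by
  have hα' : r < |α - β| := abs_sub_comm β α ▸ hα
  calc |frozenIntegrand χ Y u ρ β α|
      ≤ |dampedHilbertKernel χ Y (α - β) * u| :=
        norm_indicator_le_norm_self (fun α => dampedHilbertKernel χ Y (α - β) * u) α
    _ = |dampedHilbertKernel χ Y (α - β)| * |u| := abs_mul _ _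
    _ ≤ |α - β|⁻¹ * lorentzian Y (α - β) * |u| := by
        gcongr; exact abs_dampedHilbertKernel_le hχ _ _
    _ ≤ r⁻¹ * 1 * |u| := by gcongr; exacts [lorentzian_nonneg _ _, lorentzian_le_one _ _]
    _ = r⁻¹ * |u| := by rw [mul_one]

lemma integrableOn_frozenIntegrand (hχ : Measurable χ) (hχ1 : ∀ s, |χ s| ≤ 1) {r : ℝ}
    (hr : 0 < r) : IntegrableOn (frozenIntegrand χ Y u ρ β) {α : ℝ | r < |β - α|} := by
  have hsupp : ∀ α ∉ Metric.closedBall β ρ, frozenIntegrand χ Y u ρ β α = 0 :=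
    fun _ hα => indicator_of_notMem hα _
  have hball : IntegrableOn (frozenIntegrand χ Y u ρ β)
      ({α : ℝ | r < |β - α|} ∩ Metric.closedBall β ρ) := by
    refine Measure.integrableOn_of_bounded (M := r⁻¹ * |u|)
      (measure_ne_top_of_subset inter_subset_right measure_closedBall_lt_top.ne)
      (measurable_frozenIntegrand hχ).aestronglyMeasurable ?_
    filter_upwards [ae_restrict_mem (((aecover_lt_abs_sub β).measurableSet r).inter
      Metric.isClosed_closedBall.measurableSet)] with α hα
    exact abs_frozenIntegrand_le hχ1 hr hα.1
  exact hball.of_forall_sdiff_eq_zero ((aecover_lt_abs_sub β).measurableSet r)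
    fun α hα => hsupp α fun hα' => hα.2 ⟨hα.1, hα'⟩

end FrozenKernel

section PointwiseBound

variable {K : NNReal} {ψ φ X : ℝ → ℝ} {ε r L α β : ℝ}

/-- The integrand of `H*φ(β)` in the variable `α`, for a width `X` and cutoffs at scale `r`. -/
def adjointIntegrand (ψ X φ : ℝ → ℝ) (r β α : ℝ) : ℝ :=
  dampedHilbertKernel (scut ψ r) (X α) (α - β) * (scut ψ r α * φ α)

lemma Hstar_eq_pvI_adjointIntegrand (ψ : ℝ → ℝ) (ε : ℝ) (f g φ : ℝ → ℝ) (β : ℝ) :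
    Hstar ψ ε f g φ β
      = (2 * π)⁻¹ * pvI (adjointIntegrand ψ (Xt ε f g) φ (√ε / 2 ^ 6) β) β := by
  have hintegrand : (fun α => Hker ψ ε f g α β * φ α)
      = adjointIntegrand ψ (Xt ε f g) φ (√ε / 2 ^ 6) β := by
    funext α
    unfold Hker adjointIntegrand dampedHilbertKernel lorentzian
    ring
  rw [Hstar, hintegrand]

lemma adjointIntegrand_eq_zero (hψ : IsLipschitzCutoff K ψ) (hr : 0 < r) (hα : r < |α|) :
    adjointIntegrand ψ X φ r β α = 0 := by
  rw [adjointIntegrand, hψ.scut_eq_zero hr hα, zero_mul, mul_zero]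

lemma abs_lorentzian_sub_mul_le (hψ : IsLipschitzCutoff K ψ) (hX : IsPinchedWidth ε r L X)
    (hφ : HasC2Decay ε φ) (hε : 0 < ε) (hεr : ε ≤ r) (hrε : r ^ 2 ≤ ε) (hβ : |β| ≤ 2 * r)
    (hα : |α - β| ≤ (|β| + ε) / 2) (s : ℝ) :
    |(lorentzian (X α) s - lorentzian (X β) s) * (scut ψ r α * φ α)|
      ≤ 216 * L ^ 2 * ε / (|β| + ε) ^ 3 * |α - β| * lorentzian ε s := by
  have hr : 0 < r := hε.trans_le hεr
  have hL : 0 ≤ L := zero_le_one.trans (hX.one_le hε hr.le)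
  have hlor := lorentzian_nonneg ε s
  rcases lt_or_ge r |α| with hα_out | hα_in
  · rw [hψ.scut_eq_zero hr hα_out, zero_mul, mul_zero, abs_zero]; positivity
  have hα2 : |α| ≤ 2 * r := by linarith
  have hmax : max |α| |β| ≤ 3 / 2 * (|β| + ε) :=
    max_le (by linarith [abs_sub_abs_le_abs_sub α β]) (by linarith [abs_nonneg β])
  have hb_sq : (|β| + ε) ^ 2 ≤ 9 * ε :=
    calc (|β| + ε) ^ 2 ≤ (3 * r) ^ 2 := by gcongr; linarith
      _ ≤ 9 * ε := by linarith
  rw [abs_mul]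
  calc |lorentzian (X α) s - lorentzian (X β) s| * |scut ψ r α * φ α|
      ≤ 2 * L / ε * |X α - X β| * lorentzian ε s * (8 * ε / (|β| + ε) ^ 2) := by
        gcongr
        · exact abs_lorentzian_sub_le hε (hX.le_width α hα2) (hX.width_le α hα2)
            (hX.le_width β hβ) (hX.width_le β hβ) s
        · exact (hψ.abs_scut_mul_le r α _).trans (hφ.abs_le_of_abs_sub_le hε hα)
    _ ≤ 2 * L / ε * (L * (3 / 2 * (|β| + ε)) * |α - β|) * lorentzian ε s
          * (8 * ε / (|β| + ε) ^ 2) := by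
        gcongr
        exact (hX.abs_sub_le α β hα2 hβ).trans (by gcongr)
    _ = 24 * L ^ 2 * (|β| + ε) ^ 2 / (|β| + ε) ^ 3 * |α - β| * lorentzian ε s := by
        field_simp; ring
    _ ≤ 24 * L ^ 2 * (9 * ε) / (|β| + ε) ^ 3 * |α - β| * lorentzian ε s := by gcongr
    _ = 216 * L ^ 2 * ε / (|β| + ε) ^ 3 * |α - β| * lorentzian ε s := by ring

lemma abs_lorentzian_mul_sub_le (hψ : IsLipschitzCutoff K ψ) (hX : IsPinchedWidth ε r L X)
    (hφ : HasC2Decay ε φ) (hε : 0 < ε) (hεr : ε ≤ r) (hrε : r ^ 2 ≤ ε) (hβ : |β| ≤ 2 * r)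
    (hα : |α - β| ≤ (|β| + ε) / 2) (s : ℝ) :
    |lorentzian (X α) s * (scut ψ r α * φ α) - lorentzian (X β) s * (scut ψ r β * φ β)|
      ≤ L ^ 2 * (248 + 24 * K) * ε / (|β| + ε) ^ 3 * |α - β| * lorentzian ε s := by
  have hlor := lorentzian_nonneg ε s
  have htest : |lorentzian (X β) s * (scut ψ r α * φ α - scut ψ r β * φ β)|
      ≤ L ^ 2 * lorentzian ε s * ((32 + 24 * K) * ε / (|β| + ε) ^ 3 * |α - β|) := by
    rw [abs_mul, abs_of_nonneg (lorentzian_nonneg _ _)]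
    gcongr
    exacts [lorentzian_le_sq_mul hε (hX.le_width β hβ) (hX.width_le β hβ) s,
      hφ.abs_scut_mul_sub_le hψ hε (hε.trans_le hεr) (by linarith) hα]
  calc |lorentzian (X α) s * (scut ψ r α * φ α) - lorentzian (X β) s * (scut ψ r β * φ β)|
      = |(lorentzian (X α) s - lorentzian (X β) s) * (scut ψ r α * φ α)
          + lorentzian (X β) s * (scut ψ r α * φ α - scut ψ r β * φ β)| := by ring_nf
    _ ≤ _ := (abs_add_le _ _).trans
      (add_le_add (abs_lorentzian_sub_mul_le hψ hX hφ hε hεr hrε hβ hα s) htest)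
    _ = L ^ 2 * (248 + 24 * K) * ε / (|β| + ε) ^ 3 * |α - β| * lorentzian ε s := by ring

lemma abs_adjointIntegrand_sub_le_of_near (hψ : IsLipschitzCutoff K ψ)
    (hX : IsPinchedWidth ε r L X) (hφ : HasC2Decay ε φ) (hε : 0 < ε) (hεr : ε ≤ r)
    (hrε : r ^ 2 ≤ ε) (hβ : |β| ≤ 2 * r) (hα : |α - β| ≤ (|β| + ε) / 2) :
    |adjointIntegrand ψ X φ r β α
        - dampedHilbertKernel (scut ψ r) (X β) (α - β) * (scut ψ r β * φ β)|
      ≤ L ^ 2 * (248 + 24 * K) * ε / (|β| + ε) ^ 3 * lorentzian ε (α - β) := by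
  unfold adjointIntegrand
  set s := α - β
  set C := L ^ 2 * (248 + 24 * K) * ε / (|β| + ε) ^ 3
  have hC0 : 0 ≤ C := by positivity
  have hlor := lorentzian_nonneg ε s
  calc |dampedHilbertKernel (scut ψ r) (X α) s * (scut ψ r α * φ α)
        - dampedHilbertKernel (scut ψ r) (X β) s * (scut ψ r β * φ β)|
      = |s|⁻¹ * |scut ψ r s * (lorentzian (X α) s * (scut ψ r α * φ α)
          - lorentzian (X β) s * (scut ψ r β * φ β))| := by
        rw [← abs_inv, ← abs_mul]; unfold dampedHilbertKernel; ring_nf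
    _ ≤ |s|⁻¹ * (C * |s| * lorentzian ε s) := by
        gcongr
        exact (hψ.abs_scut_mul_le r s _).trans
          (abs_lorentzian_mul_sub_le hψ hX hφ hε hεr hrε hβ hα s)
    _ = |s|⁻¹ * |s| * (C * lorentzian ε s) := by ring
    _ ≤ C * lorentzian ε s := mul_le_of_le_one_left (mul_nonneg hC0 hlor) inv_mul_le_one

lemma abs_adjointIntegrand_le_of_far (hψ : IsLipschitzCutoff K ψ) (hX : IsPinchedWidth ε r L X)
    (hφ : HasC2Decay ε φ) (hε : 0 < ε) (hr : 0 < r) (hα : (|β| + ε) / 2 < |α - β|) :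
    |adjointIntegrand ψ X φ r β α|
      ≤ 8 * L ^ 2 * ε / (|β| + ε) ^ 3 * lorentzian ε α := by
  have hlor := lorentzian_nonneg ε α
  have hlor' := lorentzian_nonneg ε (α - β)
  rcases lt_or_ge r |α| with hα_out | hα_in
  · rw [adjointIntegrand_eq_zero hψ hr hα_out, abs_zero]; positivity
  have hα2 : |α| ≤ 2 * r := by linarith
  have hlor_far : lorentzian ε (α - β) ≤ ε ^ 2 / ((|β| + ε) / 2) ^ 2 := by
    unfold lorentzian
    gcongr
    rw [← sq_abs (α - β)]
    exact (pow_le_pow_left₀ (by positivity) hα.le 2).trans (le_add_of_nonneg_right (sq_nonneg ε))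
  rw [adjointIntegrand, abs_mul]
  calc |dampedHilbertKernel (scut ψ r) (X α) (α - β)| * |scut ψ r α * φ α|
      ≤ |α - β|⁻¹ * lorentzian (X α) (α - β) * (lorentzian ε α / ε) := by
        have := lorentzian_nonneg (X α) (α - β)
        gcongr
        · exact abs_dampedHilbertKernel_le (hψ.abs_scut_le_one r) _ _
        · exact (hψ.abs_scut_mul_le r α _).trans (hφ.abs_le_lorentzian hε.ne' α)
    _ ≤ |α - β|⁻¹ * (L ^ 2 * lorentzian ε (α - β)) * (lorentzian ε α / ε) := by
        gcongr
        exact lorentzian_le_sq_mul hε (hX.le_width α hα2) (hX.width_le α hα2) _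
    _ ≤ ((|β| + ε) / 2)⁻¹ * (L ^ 2 * (ε ^ 2 / ((|β| + ε) / 2) ^ 2)) * (lorentzian ε α / ε) := by
        gcongr
    _ = 8 * L ^ 2 * ε / (|β| + ε) ^ 3 * lorentzian ε α := by field_simp; ring

lemma abs_adjointIntegrand_sub_frozenIntegrand_le (hψ : IsLipschitzCutoff K ψ)
    (hX : IsPinchedWidth ε r L X) (hφ : HasC2Decay ε φ) (hε : 0 < ε) (hεr : ε ≤ r)
    (hrε : r ^ 2 ≤ ε) (hβ : |β| ≤ 2 * r) (α : ℝ) :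
    |adjointIntegrand ψ X φ r β α
        - frozenIntegrand (scut ψ r) (X β) (scut ψ r β * φ β) ((|β| + ε) / 2) β α|
      ≤ L ^ 2 * (248 + 24 * K) * ε / (|β| + ε) ^ 3
          * (lorentzian ε (α - β) + lorentzian ε α) := by
  have hlor := lorentzian_nonneg ε α
  have hlor' := lorentzian_nonneg ε (α - β)
  rw [frozenIntegrand]
  rcases le_or_gt |α - β| ((|β| + ε) / 2) with hnear | hfar
  · rw [indicator_of_mem (Metric.mem_closedBall.2 hnear)]
    refine (abs_adjointIntegrand_sub_le_of_near hψ hX hφ hε hεr hrε hβ hnear).trans ?_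
    gcongr
    exact le_add_of_nonneg_right hlor
  · rw [indicator_of_notMem (Metric.mem_closedBall.not.2 hfar.not_ge), sub_zero]
    refine (abs_adjointIntegrand_le_of_far hψ hX hφ hε (hε.trans_le hεr) hfar).trans ?_
    rw [mul_comm (8 : ℝ)]
    gcongr
    · linarith [K.coe_nonneg]
    · exact le_add_of_nonneg_left hlor'

lemma aestronglyMeasurable_adjointIntegrand (hψ : IsLipschitzCutoff K ψ) (hr : 0 < r)
    (hX : ContinuousOn X (Icc (-r) r)) (hφ : Measurable φ) (β : ℝ) :
    AEStronglyMeasurable (adjointIntegrand ψ X φ r β) := by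
  have hsupp : indicator (Icc (-r) r) (adjointIntegrand ψ X φ r β)
      = adjointIntegrand ψ X φ r β :=
    indicator_eq_self.2 fun α hα =>
      abs_le.1 (not_lt.1 fun hα' => hα (adjointIntegrand_eq_zero hψ hr hα'))
  rw [← hsupp, aestronglyMeasurable_indicator_iff measurableSet_Icc]
  have hpair : AEMeasurable (fun α => (X α, α - β)) (volume.restrict (Icc (-r) r)) :=
    (hX.aemeasurable measurableSet_Icc).prodMk (by fun_prop)
  have hkernel := (measurable_dampedHilbertKernel (hψ.measurable_scut r)).comp_aemeasurable hpair
  exact (hkernel.mul ((hψ.measurable_scut r).mul hφ).aemeasurable).aestronglyMeasurable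

lemma pvI_adjointIntegrand_eq_zero (hψ : IsLipschitzCutoff K ψ) (hr : 0 < r) (hβ : 2 * r < |β|) :
    pvI (adjointIntegrand ψ X φ r β) β = 0 := by
  have hzero : ∀ α, adjointIntegrand ψ X φ r β α = 0 := by
    intro α
    rcases lt_or_ge r |α| with hα | hα
    · exact adjointIntegrand_eq_zero hψ hr hα
    · have hαβ : r < |α - β| := by linarith [abs_sub_abs_le_abs_sub β α, abs_sub_comm β α]
      rw [adjointIntegrand, dampedHilbertKernel, hψ.scut_eq_zero hr hαβ, mul_zero, zero_mul,
        zero_mul]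
  simp only [hzero, pvI, integral_zero]
  exact tendsto_const_nhds.limUnder_eq

lemma abs_pvI_adjointIntegrand_le (hψ : IsLipschitzCutoff K ψ) (hX : IsPinchedWidth ε r L X)
    (hφ : HasC2Decay ε φ) (hε : 0 < ε) (hεr : ε ≤ r) (hrε : r ^ 2 ≤ ε) (β : ℝ) :
    |pvI (adjointIntegrand ψ X φ r β) β|
      ≤ 2 * π * (L ^ 2 * (248 + 24 * K) * (ε ^ 2 / (|β| + ε) ^ 3)) := by
  have hr : 0 < r := hε.trans_le hεr
  rcases lt_or_ge (2 * r) |β| with hβ | hβ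
  · rw [pvI_adjointIntegrand_eq_zero hψ hr hβ, abs_zero]; positivity
  have hL : 0 ≤ L := zero_le_one.trans (hX.one_le hε hr.le)
  have hscut := hψ.measurable_scut r
  have hXcont : ContinuousOn X (Icc (-r) r) :=
    (hX.continuousOn hL).mono (Icc_subset_Icc (by linarith) (by linarith))
  have hclose := abs_adjointIntegrand_sub_frozenIntegrand_le hψ hX hφ hε hεr hrε hβ
  have hlor : Integrable (lorentzian ε) := integrable_lorentzian hε.ne'
  have hmajorant : Integrable fun α => L ^ 2 * (248 + 24 * K) * ε / (|β| + ε) ^ 3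
      * (lorentzian ε (α - β) + lorentzian ε α) :=
    ((hlor.comp_sub_right β).add hlor).const_mul _
  have hmeas := (aestronglyMeasurable_adjointIntegrand hψ hr hXcont
    hφ.differentiable.continuous.measurable β).sub (measurable_frozenIntegrand (Y := X β)
      (u := scut ψ r β * φ β) (ρ := (|β| + ε) / 2) (β := β) hscut).aestronglyMeasurable
  have hdiff := hmajorant.mono' hmeas (Eventually.of_forall hclose)
  rw [pvI_eq_integral_sub_of_odd_about (frozenIntegrand_odd_about (hψ.scut_neg r))
    (fun _ => integrableOn_frozenIntegrand hscut (hψ.abs_scut_le_one r)) hdiff]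
  refine (abs_integral_le_integral_abs.trans
    (integral_mono hdiff.abs hmajorant hclose)).trans_eq ?_
  calc ∫ α, L ^ 2 * (248 + 24 * K) * ε / (|β| + ε) ^ 3 * (lorentzian ε (α - β) + lorentzian ε α)
      = L ^ 2 * (248 + 24 * K) * ε / (|β| + ε) ^ 3 * (ε * π + ε * π) := by
        rw [integral_const_mul, integral_add (hlor.comp_sub_right β) hlor,
          integral_sub_right_eq_self (lorentzian ε) β, integral_lorentzian hε]
    _ = 2 * π * (L ^ 2 * (248 + 24 * K) * (ε ^ 2 / (|β| + ε) ^ 3)) := by ring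

end PointwiseBound

theorem Hstar_pointwise_bound_general {K : NNReal} {ψ f g φ : ℝ → ℝ} {ε L : ℝ}
    (hψ : IsLipschitzCutoff K ψ) (hX : IsPinchedWidth ε (√ε / 2 ^ 6) L (Xt ε f g))
    (hφ : HasC2Decay ε φ) (hε : 0 < ε) (hε' : ε ≤ 1 / 2 ^ 12) (β : ℝ) :
    |Hstar ψ ε f g φ β| ≤ L ^ 2 * (248 + 24 * K) * (ε ^ 2 / (ε ^ 3 + |β| ^ 3)) := by
  have hsq : √ε ^ 2 = ε := Real.sq_sqrt hε.le
  have hsqrt : √ε ≤ 1 / 2 ^ 6 := Real.sqrt_le_iff.2 ⟨by positivity, by linarith⟩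
  have hεr : ε ≤ √ε / 2 ^ 6 := by nlinarith [Real.sqrt_nonneg ε]
  have hrε : (√ε / 2 ^ 6) ^ 2 ≤ ε := by rw [div_pow, hsq]; linarith
  rw [Hstar_eq_pvI_adjointIntegrand, abs_mul, abs_of_pos (by positivity),
    inv_mul_le_iff₀ (by positivity)]
  refine (abs_pvI_adjointIntegrand_le hψ hX hφ hε hεr hrε β).trans ?_
  gcongr
  rw [add_comm]
  exact pow_add_pow_le (abs_nonneg β) hε.le three_ne_zero

/-- **Pointwise bound on `H*φ` (estimate (3.110)).**  For every `φ ∈ C₂` and every `β ∈ I_δ`,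
`|H*φ(β)| ≲ ε²/(ε³+|β|³)`, with the constant depending only on `A`, `δ` (and `ψ`). -/
theorem Hstar_pointwise_bound (δ A : ℝ) (hδ : δ ∈ Ioc (0:ℝ) (1/100)) (hA : 1 ≤ A)
    (ψ : ℝ → ℝ) (hψ : IsCutoff ψ) :
    ∃ C : ℝ, 0 < C ∧
      ∀ ε : ℝ, ε ∈ Ioc (0:ℝ) (δ ^ 2 / 100) →
      ∀ f g : ℝ → ℝ, GoodFG δ A ε f g →
      ∀ φ : ℝ → ℝ, InC2 δ ε φ →
        ∀ β ∈ Ioo (-δ) δ,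
          |Hstar ψ ε f g φ β| ≤ C * (ε ^ 2 / (ε ^ 3 + |β| ^ 3)) := by
  obtain ⟨K, hψK⟩ := hψ.exists_isLipschitzCutoff
  refine ⟨(2 + 4 * A) ^ 2 * (248 + 24 * K), by positivity, fun ε hε f g hfg φ hφ β _ => ?_⟩
  have hsqrt : √ε ≤ δ / 10 := Real.sqrt_le_iff.2 ⟨by linarith [hδ.1], by linarith [hε.2]⟩
  exact Hstar_pointwise_bound_general hψK (hfg.isPinchedWidth_Xt (by linarith) hε.1
    (by linarith [hδ.1]) (by rw [div_pow, Real.sq_sqrt hε.1.le]; linarith [hε.1]))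
    (hφ.hasC2Decay hε.1.le) hε.1 (by nlinarith [hδ.1, hδ.2, hε.2]) β
end
end
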